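/- arXiv:2402.00417 — 3 statements merged into one kernel-verified Lean document; each statement's English description precedes it below -/
import Mathlib

section
/- Let M be a monoid and d, b ∈ M with d·d = 1 and b·b = b, and let k0, k1, r > 0. Then: (1) for each i ∈ {01, 10, 11}, eqᵢ•(k0) ∧ ((d·b)^(k1) = (d·b)^(k1+2r)) holds if and only if eqᵢ•(min(k0, k1)) holds; (2) for each i ∈ {01, 10, 11}, ((d·b)^(k0) = (d·b)^(k0+2r+1)) ∧ eqᵢ°(k1) holds if and only if eqᵢ•(min(k0, k1)) holds; (3) for all distinct i, j ∈ {01, 10, 11}, eqᵢ°(k0) ∧ eqⱼ•(k1) holds if and only if eq11•(min(k0, k1)) holds. -/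
/-! Write `c = d * b`; then `c * d * c = c`. `St c k` says the powers of `c` are constant from `k`
on; `Rv`, `Lv` say some power of `c` absorbs `d` on the right, left. -/

def St {M : Type*} [Monoid M] (c : M) (k : ℕ) : Prop := c ^ k = c ^ (k + 1)
def Rv {M : Type*} [Monoid M] (c d : M) : Prop := ∃ n, c ^ n = c ^ n * d
def Lv {M : Type*} [Monoid M] (c d : M) : Prop := ∃ n, c ^ n = d * c ^ n

section
variable {M : Type*} [Monoid M] {c d : M}

lemma St.eq {k : ℕ} (h : St c k) (n : ℕ) : c ^ (n + k) = c ^ k := by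
  induction n with
  | zero => simp
  | succ n ih =>
    rw [show n + 1 + k = n + (k + 1) by omega, pow_add, ← h, ← pow_add, ih]

lemma St.mono {k m : ℕ} (h : St c k) (hm : k ≤ m) : St c m := by
  obtain ⟨n, rfl⟩ := Nat.exists_eq_add_of_le' hm
  unfold St
  rw [h.eq, show n + k + 1 = (n + 1) + k by omega, h.eq]

lemma St.min_iff (k m : ℕ) : St c (min k m) ↔ St c k ∧ St c m := by
  constructor
  · intro h
    exact ⟨h.mono (min_le_left _ _), h.mono (min_le_right _ _)⟩
  · rintro ⟨h1, h2⟩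
    rcases min_choice k m with h | h <;> rw [h] <;> assumption

lemma per_mul {k l : ℕ} (h : c ^ k = c ^ (k + l)) (n : ℕ) : c ^ (k + l * n) = c ^ k := by
  induction n with
  | zero => simp
  | succ n ih =>
    rw [show k + l * (n + 1) = (k + l * n) + l by ring, pow_add, ih, ← pow_add, ← h]

lemma per_up {k l : ℕ} (h : c ^ k = c ^ (k + l)) (n : ℕ) : c ^ (n + k) = c ^ (n + k + l) := by
  rw [add_assoc, pow_add, h, ← pow_add]

lemma per_iff {k l : ℕ} (hl : 0 < l) : (c ^ k = c ^ (k + l) ∧ ∃ n, St c n) ↔ St c k := by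
  constructor
  · rintro ⟨h, n, hn⟩
    have h1 := per_mul h n
    have h2 : St c (k + l * n) := hn.mono (by nlinarith)
    unfold St at h2 ⊢
    rw [← h1, h2, pow_succ, h1, pow_succ]
  · intro h
    refine ⟨?_, k, h⟩
    rw [add_comm k l, h.eq]

lemma odd_two {k m r : ℕ} (h : c ^ k = c ^ (k + (2 * r + 1))) (h2 : c ^ m = c ^ (m + 2)) :
    ∃ n, St c n := by
  refine ⟨m + k, ?_⟩
  unfold St
  rw [per_up h m, show m + k + (2 * r + 1) = (k + 1) + (m + 2 * r) by ring, pow_add,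
    per_mul h2 r, ← pow_add]
  congr 1; ring

lemma Rv.absorb (h : Rv c d) {k : ℕ} (hk : St c k) : c ^ k = c ^ k * d := by
  obtain ⟨n, hn⟩ := h
  have h1 := hk.eq n
  rw [← h1, add_comm, pow_add, mul_assoc, ← hn]

lemma Lv.absorb (h : Lv c d) {k : ℕ} (hk : St c k) : c ^ k = d * c ^ k := by
  obtain ⟨n, hn⟩ := h
  have h1 := hk.eq n
  rw [← h1, pow_add, ← mul_assoc, ← hn]

lemma pdc (hc : c * d * c = c) {k : ℕ} (hk : 0 < k) : c ^ k * d * c = c ^ k := by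
  obtain ⟨k, rfl⟩ := Nat.exists_eq_add_of_lt hk
  rw [zero_add, pow_succ, mul_assoc, mul_assoc, ← mul_assoc c, hc]

lemma cdp (hc : c * d * c = c) {k : ℕ} (hk : 0 < k) : c * d * c ^ k = c ^ k := by
  obtain ⟨k, rfl⟩ := Nat.exists_eq_add_of_lt hk
  rw [zero_add, pow_succ', ← mul_assoc, hc]

lemma e01b (hc : c * d * c = c) {k : ℕ} (hk : 0 < k) :
    c ^ k = c ^ k * d ↔ St c k ∧ Rv c d := by
  constructor
  · intro h
    refine ⟨?_, k, h⟩
    unfold St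
    rw [pow_succ]
    nth_rewrite 2 [h]
    rw [pdc hc hk]
  · rintro ⟨h, h'⟩
    exact h'.absorb h

lemma e10b (hc : c * d * c = c) {k : ℕ} (hk : 0 < k) :
    c ^ k = d * c ^ k ↔ St c k ∧ Lv c d := by
  constructor
  · intro h
    refine ⟨?_, k, h⟩
    unfold St
    rw [pow_succ']
    nth_rewrite 2 [h]
    rw [← mul_assoc, cdp hc hk]
  · rintro ⟨h, h'⟩
    exact h'.absorb h

lemma e11b (hc : c * d * c = c) (k : ℕ) :
    c ^ k = d * c ^ (k + 1) * d ↔ St c k ∧ Rv c d ∧ Lv c d := by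
  constructor
  · intro h
    have h1 : c ^ (k + 1) = c ^ (k + 1) * d := by
      nth_rewrite 1 [pow_succ', h]
      rw [← mul_assoc, ← mul_assoc, cdp hc (Nat.succ_pos k)]
    have h2 : c ^ (k + 1) = d * c ^ (k + 1) := by
      nth_rewrite 1 [pow_succ, h]
      rw [mul_assoc, mul_assoc, ← mul_assoc (c ^ (k + 1)), pdc hc (Nat.succ_pos k)]
    refine ⟨?_, ⟨_, h1⟩, ⟨_, h2⟩⟩
    unfold St
    rw [← h2, ← h1] at h
    exact h
  · rintro ⟨h, hR, hL⟩
    have h1 : c ^ (k + 1) = c ^ k := h.symm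
    rw [h1, ← hL.absorb h, ← hR.absorb h]

lemma e01o_per (hd : d * d = 1) {k : ℕ} (h : c ^ k = c ^ (k + 1) * d) : c ^ k = c ^ (k + 2) := by
  have h1 : c ^ k * d = c ^ (k + 1) := by rw [h, mul_assoc, hd, mul_one]
  rw [h, pow_succ', mul_assoc, h1, ← pow_succ']

lemma e10o_per (hd : d * d = 1) {k : ℕ} (h : c ^ k = d * c ^ (k + 1)) : c ^ k = c ^ (k + 2) := by
  have h1 : d * c ^ k = c ^ (k + 1) := by rw [h, ← mul_assoc, hd, one_mul]
  rw [h, pow_succ, ← mul_assoc, h1, ← pow_succ]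

lemma e01o (hd : d * d = 1) (k : ℕ) :
    (c ^ k = c ^ (k + 1) * d ∧ ∃ n, St c n) ↔ St c k ∧ Rv c d := by
  constructor
  · rintro ⟨h, hn⟩
    have hk : St c k := (per_iff two_pos).1 ⟨e01o_per hd h, hn⟩
    refine ⟨hk, k, ?_⟩
    unfold St at hk
    rwa [← hk] at h
  · rintro ⟨h, hR⟩
    refine ⟨?_, k, h⟩
    rw [← show c ^ k = _ from h]
    exact hR.absorb h

lemma e10o (hd : d * d = 1) (k : ℕ) :
    (c ^ k = d * c ^ (k + 1) ∧ ∃ n, St c n) ↔ St c k ∧ Lv c d := by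
  constructor
  · rintro ⟨h, hn⟩
    have hk : St c k := (per_iff two_pos).1 ⟨e10o_per hd h, hn⟩
    refine ⟨hk, k, ?_⟩
    unfold St at hk
    rwa [← hk] at h
  · rintro ⟨h, hR⟩
    refine ⟨?_, k, h⟩
    rw [← show c ^ k = _ from h]
    exact hR.absorb h

lemma e11o_01 (hc : c * d * c = c) (hd : d * d = 1) {k : ℕ} (hk : 0 < k)
    (h : c ^ k = d * c ^ k * d) : c ^ k = c ^ (k + 1) * d := by
  have h1 : c ^ (k + 1) = c ^ k * d := by
    rw [pow_succ']
    nth_rewrite 1 [h]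
    rw [← mul_assoc, ← mul_assoc, cdp hc hk]
  rw [h1, mul_assoc, hd, mul_one]

lemma e11o_10 (hc : c * d * c = c) (hd : d * d = 1) {k : ℕ} (hk : 0 < k)
    (h : c ^ k = d * c ^ k * d) : c ^ k = d * c ^ (k + 1) := by
  have h1 : c ^ (k + 1) = d * c ^ k := by
    rw [pow_succ]
    nth_rewrite 1 [h]
    rw [mul_assoc, mul_assoc, ← mul_assoc (c ^ k), pdc hc hk]
  rw [h1, ← mul_assoc, hd, one_mul]

lemma e11o (hc : c * d * c = c) (hd : d * d = 1) {k : ℕ} (hk : 0 < k) :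
    (c ^ k = d * c ^ k * d ∧ ∃ n, St c n) ↔ St c k ∧ Rv c d ∧ Lv c d := by
  constructor
  · rintro ⟨h, hn⟩
    obtain ⟨h1, h2⟩ := (e01o hd k).1 ⟨e11o_01 hc hd hk h, hn⟩
    obtain ⟨-, h3⟩ := (e10o hd k).1 ⟨e11o_10 hc hd hk h, hn⟩
    exact ⟨h1, h2, h3⟩
  · rintro ⟨h, hR, hL⟩
    exact ⟨by rw [← hL.absorb h, ← hR.absorb h], k, h⟩

end

lemma tr_bd {M : Type*} [Monoid M] {d b : M} (hd : d * d = 1) (k : ℕ) :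
    (b * d) ^ k = d * (d * b) ^ k * d := by
  induction k with
  | zero => simp [hd]
  | succ k ih =>
    have : d * (d * b) ^ (k + 1) * d = d * (d * b) ^ k * d * (d * d * b * d) := by
      rw [pow_succ]; simp only [mul_assoc]; rw [← mul_assoc d d, hd, one_mul]
    rw [this, ← ih, hd, one_mul, pow_succ]

lemma tr_bdb {M : Type*} [Monoid M] {d b : M} (hd : d * d = 1) (k : ℕ) :
    (b * d) ^ k * b = d * (d * b) ^ (k + 1) := by
  rw [tr_bd hd, pow_succ]; simp only [mul_assoc]

theorem stmt_12 {M : Type*} [Monoid M] (d b : M) (hd : d * d = 1) (hb : b * b = b)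
    (k0 k1 r : ℕ) (hk0 : 0 < k0) (hk1 : 0 < k1) (hr : 0 < r) :
    -- (1) eqᵢ•(k0) ∧ eq00(k1, 2r) ↔ eqᵢ•(min k0 k1), for i ∈ {01, 10, 11}
    (((d * b) ^ k0 = (d * b) ^ k0 * d ∧ (d * b) ^ k1 = (d * b) ^ (k1 + 2 * r)) ↔
      (d * b) ^ min k0 k1 = (d * b) ^ min k0 k1 * d) ∧
    (((d * b) ^ k0 = (b * d) ^ (k0 - 1) * b ∧ (d * b) ^ k1 = (d * b) ^ (k1 + 2 * r)) ↔
      (d * b) ^ min k0 k1 = (b * d) ^ (min k0 k1 - 1) * b) ∧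
    (((d * b) ^ k0 = (b * d) ^ (k0 + 1) ∧ (d * b) ^ k1 = (d * b) ^ (k1 + 2 * r)) ↔
      (d * b) ^ min k0 k1 = (b * d) ^ (min k0 k1 + 1)) ∧
    -- (2) eq00(k0, 2r+1) ∧ eqᵢ°(k1) ↔ eqᵢ•(min k0 k1), for i ∈ {01, 10, 11}
    (((d * b) ^ k0 = (d * b) ^ (k0 + (2 * r + 1)) ∧ (d * b) ^ k1 = (d * b) ^ (k1 + 1) * d) ↔
      (d * b) ^ min k0 k1 = (d * b) ^ min k0 k1 * d) ∧
    (((d * b) ^ k0 = (d * b) ^ (k0 + (2 * r + 1)) ∧ (d * b) ^ k1 = (b * d) ^ k1 * b) ↔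
      (d * b) ^ min k0 k1 = (b * d) ^ (min k0 k1 - 1) * b) ∧
    (((d * b) ^ k0 = (d * b) ^ (k0 + (2 * r + 1)) ∧ (d * b) ^ k1 = (b * d) ^ k1) ↔
      (d * b) ^ min k0 k1 = (b * d) ^ (min k0 k1 + 1)) ∧
    -- (3) eqᵢ°(k0) ∧ eqⱼ•(k1) ↔ eq11•(min k0 k1), for distinct i, j ∈ {01, 10, 11}
    (((d * b) ^ k0 = (d * b) ^ (k0 + 1) * d ∧ (d * b) ^ k1 = (b * d) ^ (k1 - 1) * b) ↔
      (d * b) ^ min k0 k1 = (b * d) ^ (min k0 k1 + 1)) ∧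
    (((d * b) ^ k0 = (d * b) ^ (k0 + 1) * d ∧ (d * b) ^ k1 = (b * d) ^ (k1 + 1)) ↔
      (d * b) ^ min k0 k1 = (b * d) ^ (min k0 k1 + 1)) ∧
    (((d * b) ^ k0 = (b * d) ^ k0 * b ∧ (d * b) ^ k1 = (d * b) ^ k1 * d) ↔
      (d * b) ^ min k0 k1 = (b * d) ^ (min k0 k1 + 1)) ∧
    (((d * b) ^ k0 = (b * d) ^ k0 * b ∧ (d * b) ^ k1 = (b * d) ^ (k1 + 1)) ↔
      (d * b) ^ min k0 k1 = (b * d) ^ (min k0 k1 + 1)) ∧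
    (((d * b) ^ k0 = (b * d) ^ k0 ∧ (d * b) ^ k1 = (d * b) ^ k1 * d) ↔
      (d * b) ^ min k0 k1 = (b * d) ^ (min k0 k1 + 1)) ∧
    (((d * b) ^ k0 = (b * d) ^ k0 ∧ (d * b) ^ k1 = (b * d) ^ (k1 - 1) * b) ↔
      (d * b) ^ min k0 k1 = (b * d) ^ (min k0 k1 + 1)) := by
  have hm : 0 < min k0 k1 := lt_min hk0 hk1
  have hc : (d * b) * d * (d * b) = d * b := by
    rw [mul_assoc, ← mul_assoc d d, hd, one_mul, mul_assoc, hb]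
  have hp : ∀ k, 0 < k → (b * d) ^ (k - 1) * b = d * (d * b) ^ k := by
    intro k hk
    rw [tr_bdb hd, Nat.sub_add_cancel hk]
  rw [hp _ hk0, hp _ hk1, hp _ hm]
  simp only [tr_bdb hd]
  simp only [tr_bd hd]
  generalize d * b = c at *
  have hS : ∀ {k}, St c k → ∃ n, St c n := fun h => ⟨_, h⟩
  have hmin := St.min_iff (c := c) k0 k1
  have p1 := per_iff (c := c) (k := k1) (l := 2 * r) (by omega)
  have p0 := per_iff (c := c) (k := k0) (l := 2 * r + 1) (by omega)
  rw [e01b hc hk0, e10b hc hk0, e11b hc k0, e01b hc hk1, e10b hc hk1, e11b hc k1,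
    e01b hc hm, e10b hc hm, e11b hc (min k0 k1), hmin]
  have a0 := e01o (c := c) hd k0
  have b0 := e10o (c := c) hd k0
  have c0 := e11o (c := c) hc hd hk0
  have a1 := e01o (c := c) hd k1
  have b1 := e10o (c := c) hd k1
  have c1 := e11o (c := c) hc hd hk1
  have t0 := @hS k0
  have t1 := @hS k1
  have oa : c ^ k0 = c ^ (k0 + (2 * r + 1)) → c ^ k1 = c ^ (k1 + 1) * d → ∃ n, St c n :=
    fun h h' => odd_two h (e01o_per hd h')
  have ob : c ^ k0 = c ^ (k0 + (2 * r + 1)) → c ^ k1 = d * c ^ (k1 + 1) → ∃ n, St c n :=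
    fun h h' => odd_two h (e10o_per hd h')
  have oc : c ^ k0 = c ^ (k0 + (2 * r + 1)) → c ^ k1 = d * c ^ k1 * d → ∃ n, St c n :=
    fun h h' => odd_two h (e01o_per hd (e11o_01 hc hd hk1 h'))
  clear hmin hS hp hc hd hb hm hk0 hk1 hr
  generalize (∃ n, St c n) = E at *
  generalize St c k0 = S0 at *
  generalize St c k1 = S1 at *
  generalize Rv c d = R at *
  generalize Lv c d = L at *
  generalize (c ^ k0 = c ^ (k0 + (2 * r + 1))) = P0 at *
  generalize (c ^ k1 = c ^ (k1 + 2 * r)) = P1 at *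
  generalize (c ^ k0 = c ^ (k0 + 1) * d) = A0 at *
  generalize (c ^ k1 = c ^ (k1 + 1) * d) = A1 at *
  generalize (c ^ k0 = d * c ^ (k0 + 1)) = B0 at *
  generalize (c ^ k1 = d * c ^ (k1 + 1)) = B1 at *
  generalize (c ^ k0 = d * c ^ k0 * d) = C0 at *
  generalize (c ^ k1 = d * c ^ k1 * d) = C1 at *
  refine ⟨?_, ?_, ?_, ?_, ?_, ?_, ?_, ?_, ?_, ?_, ?_, ?_⟩ <;> grind
end

section
/- Let F be the free monoid on two generators d and b, and let G be the set of pairs of words of the form (b^{d0}·(d·b)^{k0}·d^{f0}, b^{d1}·(d·b)^{k1}·d^{f1}) with d0, f0, d1, f1 ∈ {0, 1} and k0, k1 ∈ ℕ. For every finite subset S ⊆ G there exists a subset S' ⊆ G with at most one element such that the congruence on F generated by {(d·d, 1), (b·b, b)} ∪ S equals the congruence generated by {(d·d, 1), (b·b, b)} ∪ S'. In other words, every strict 2-PIM has a presentation with at most three defining equations, namely d² = 1, b² = b, and possibly one further equation of the generic form. -/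
/-- The free monoid on the two generators `d` (the involution) and `b` (the idempotent). -/
abbrev F2 : Type := FreeMonoid Bool

/-- The generator `d`. -/
def dF : F2 := FreeMonoid.of true

/-- The generator `b`. -/
def bF : F2 := FreeMonoid.of false

/-- The congruence on the free monoid generated by `d·d ~ 1`, `b·b ~ b`
and the extra relations in `R`. -/
def presCon (R : Set (F2 × F2)) : Con F2 :=
  conGen (fun x y => (x, y) ∈ insert (dF * dF, (1 : F2)) (insert (bF * bF, bF) R))

/-- The set of pairs of words of the generic form
`b^{d0}·(d·b)^{k0}·d^{f0} = b^{d1}·(d·b)^{k1}·d^{f1}` with `d0, f0, d1, f1 ∈ {0, 1}`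
and `k0, k1 ∈ ℕ`. -/
def genericEqs : Set (F2 × F2) :=
  {p | ∃ d0 f0 d1 f1 k0 k1 : ℕ, d0 ≤ 1 ∧ f0 ≤ 1 ∧ d1 ≤ 1 ∧ f1 ≤ 1 ∧
    p = (bF ^ d0 * (dF * bF) ^ k0 * dF ^ f0, bF ^ d1 * (dF * bF) ^ k1 * dF ^ f1)}

namespace PIM

/-- The two base relations. -/
structure Base {Q : Type*} [Monoid Q] (d b : Q) : Prop where
  dd : d * d = 1
  bb : b * b = b

/-- The element `b (d b)^k`. -/
def TT {Q : Type*} [Monoid Q] (d b : Q) (k : ℕ) : Q := b * (d * b) ^ k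

/-- Normal forms: `d^i`, or `d^i (b (d b)^k) d^j`. -/
inductive NF where
  | u (i : Bool) : NF
  | t (i : Bool) (k : ℕ) (j : Bool) : NF

/-- `d` or `1`. -/
def pw {Q : Type*} [Monoid Q] (d : Q) (i : Bool) : Q := if i then d else 1

/-- Evaluation of a normal form. -/
def ev {Q : Type*} [Monoid Q] (d b : Q) : NF → Q
  | .u i => pw d i
  | .t i k j => pw d i * TT d b k * pw d j

section monoid
variable {Q : Type*} [Monoid Q] {d b : Q}

theorem Base.ddx (h : Base d b) (x : Q) : d * (d * x) = x := by
  rw [← mul_assoc, h.dd, one_mul]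

theorem Base.xdd (h : Base d b) (x : Q) : x * d * d = x := by
  rw [mul_assoc, h.dd, mul_one]

theorem Base.bT (h : Base d b) (k : ℕ) : b * TT d b k = TT d b k := by
  rw [TT, ← mul_assoc, h.bb]

theorem TT_eq (k : ℕ) : TT d b k = (b * d) ^ k * b := by
  induction k with
  | zero => simp [TT]
  | succ k ih =>
    have : TT d b (k+1) = TT d b k * (d * b) := by simp only [TT, pow_succ, mul_assoc]
    rw [this, ih, pow_succ]; simp only [mul_assoc]

theorem Base.Tb (h : Base d b) (k : ℕ) : TT d b k * b = TT d b k := by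
  rw [TT_eq, mul_assoc, h.bb]

theorem TT_right (k n : ℕ) : TT d b k * (d * b) ^ n = TT d b (k + n) := by
  simp only [TT, pow_add, mul_assoc]

theorem TT_left (k n : ℕ) : (b * d) ^ n * TT d b k = TT d b (k + n) := by
  rw [TT_eq, TT_eq, add_comm k n, pow_add, mul_assoc]

theorem bdT (k : ℕ) : b * (d * TT d b k) = TT d b (k + 1) := by
  rw [← TT_left k 1, pow_one, mul_assoc]

theorem Tdb (k : ℕ) : TT d b k * d * b = TT d b (k + 1) := by
  rw [← TT_right k 1, pow_one, mul_assoc]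

/-- `T a = T m`. -/
def P00 (d b : Q) (a m : ℕ) : Prop := TT d b a = TT d b m
/-- `T a = d T m`. -/
def P10 (d b : Q) (a m : ℕ) : Prop := TT d b a = d * TT d b m
/-- `T a = T m d`. -/
def P01 (d b : Q) (a m : ℕ) : Prop := TT d b a = TT d b m * d
/-- `T a = d T m d`. -/
def P11 (d b : Q) (a m : ℕ) : Prop := TT d b a = d * (TT d b m * d)

theorem P00.shift {a m : ℕ} (h : P00 d b a m) (n : ℕ) : P00 d b (a + n) (m + n) := by
  unfold P00 at *; rw [← TT_right, h, TT_right]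
theorem P10.shift {a m : ℕ} (h : P10 d b a m) (n : ℕ) : P10 d b (a + n) (m + n) := by
  unfold P10 at *; rw [← TT_right, h, mul_assoc, TT_right]
theorem P01.shift {a m : ℕ} (h : P01 d b a m) (n : ℕ) : P01 d b (a + n) (m + n) := by
  unfold P01 at *; rw [← TT_left, h, ← mul_assoc, TT_left]
theorem P10.l0 (hb : Base d b) {a m : ℕ} (h : P10 d b a m) : P00 d b a (m + 1) := by
  have := congrArg (b * ·) h
  simp only [hb.bT, bdT] at this
  exact this
theorem P10.symm (hb : Base d b) {a m : ℕ} (h : P10 d b a m) : P10 d b m a := by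
  unfold P10 at *; rw [h, hb.ddx]
theorem P01.symm (hb : Base d b) {a m : ℕ} (h : P01 d b a m) : P01 d b m a := by
  unfold P01 at *; rw [h, hb.xdd]
theorem P11.symm (hb : Base d b) {a m : ℕ} (h : P11 d b a m) : P11 d b m a := by
  unfold P11 at *; rw [h]; simp only [mul_assoc, hb.ddx, hb.dd, mul_one]
theorem P01.l0 (hb : Base d b) {a m : ℕ} (h : P01 d b a m) : P00 d b a (m + 1) := by
  have := congrArg (· * b) h
  simp only [hb.Tb, Tdb] at this
  exact this
theorem P11.l01 (hb : Base d b) {a m : ℕ} (h : P11 d b a m) : P01 d b a (m + 1) := by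
  have := congrArg (b * ·) h
  simp only [hb.bT] at this
  rw [← mul_assoc d, ← mul_assoc b, bdT] at this
  exact this
theorem P11.l10 (hb : Base d b) {a m : ℕ} (h : P11 d b a m) : P10 d b a (m + 1) := by
  have := congrArg (· * b) h
  simp only [hb.Tb] at this
  rw [mul_assoc d, Tdb] at this
  exact this
theorem P11.mk {a m : ℕ} (h : P10 d b a (m+1)) (hR : P01 d b (m+1) m) :
    P11 d b a m := by
  unfold P10 P01 P11 at *; rw [h, hR]

/-- Abstract shift-invariant relation compatible with `P00`. -/
structure Good (d b : Q) (X : ℕ → ℕ → Prop) : Prop where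
  shift : ∀ {a m : ℕ}, X a m → ∀ n, X (a + n) (m + n)
  compat : ∀ {a a' m m' : ℕ}, P00 d b a a' → P00 d b m m' → X a m → X a' m'
  symm : ∀ {a m : ℕ}, X a m → X m a
  l0 : ∀ {a m : ℕ}, X a m → P00 d b a (m + 1)

theorem good10 (hb : Base d b) : Good d b (P10 d b) where
  shift h := h.shift
  compat h h' h'' := by unfold P00 P10 at *; rw [← h, h'', h']
  symm h := h.symm hb
  l0 h := h.l0 hb

theorem good01 (hb : Base d b) : Good d b (P01 d b) where
  shift h := h.shift
  compat h h' h'' := by unfold P00 P01 at *; rw [← h, h'', h']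
  symm h := h.symm hb
  l0 h := h.l0 hb

theorem P00.mul {k p : ℕ} (h : P00 d b k (k + p)) (n : ℕ) : P00 d b k (k + p * n) := by
  induction n with
  | zero => exact rfl
  | succ n ih =>
    have := ih.shift p
    exact (h.trans this).trans (by rw [Nat.mul_succ, add_assoc])

theorem P00.of_le {k p a m : ℕ} (h : P00 d b k (k + p)) (ha : k ≤ a) (ham : a ≤ m)
    (e : a ≡ m [MOD p]) : P00 d b a m := by
  obtain ⟨q, hq⟩ := (Nat.modEq_iff_dvd' ham).1 e
  have := (h.mul q).shift (a - k)
  have e1 : k + (a - k) = a := by omega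
  have e2 : k + p * q + (a - k) = m := by omega
  rwa [e1, e2] at this

theorem P00.of_mod {k p a m : ℕ} (h : P00 d b k (k + p)) (ha : k ≤ a) (hm : k ≤ m)
    (e : a ≡ m [MOD p]) : P00 d b a m := by
  rcases le_total a m with h1 | h1
  · exact h.of_le ha h1 e
  · exact (h.of_le hm h1 e.symm).symm

/-- Complete description of `P00`. -/
def Desc (d b : Q) (k p : ℕ) : Prop :=
  0 < p ∧ P00 d b k (k + p) ∧
    ∀ a m, P00 d b a m → a = m ∨ (k ≤ a ∧ k ≤ m ∧ a ≡ m [MOD p])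

theorem exists_desc : (∀ a m, P00 d b a m → a = m) ∨ ∃ k p, Desc d b k p := by
  classical
  by_cases H : ∃ k p, 0 < p ∧ P00 d b k (k + p)
  · right
    refine ⟨Nat.find H, Nat.find (Nat.find_spec H), (Nat.find_spec (Nat.find_spec H)).1,
      (Nat.find_spec (Nat.find_spec H)).2, ?_⟩
    have hk : ∀ a, a < Nat.find H → ¬ ∃ p, 0 < p ∧ P00 d b a (a + p) := fun a h => Nat.find_min H h
    have hp : ∀ q, q < Nat.find (Nat.find_spec H) → ¬ (0 < q ∧ P00 d b (Nat.find H) (Nat.find H + q)) :=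
      fun a h => Nat.find_min (Nat.find_spec H) h
    obtain ⟨p0, hP⟩ := Nat.find_spec (Nat.find_spec H)
    generalize Nat.find (Nat.find_spec H) = p at *
    generalize Nat.find H = k at *
    have main : ∀ a m, a < m → P00 d b a m → k ≤ a ∧ a ≡ m [MOD p] := by
      intro a m ham h
      have hka : k ≤ a := by
        by_contra hlt
        refine hk a (by omega) ⟨m - a, by omega, ?_⟩
        rwa [show a + (m - a) = m by omega]
      refine ⟨hka, ?_⟩
      have hN : a ≤ k + p * a := by nlinarith
      have h1 := hP.mul a
      have h2 := h.shift (k + p * a - a)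
      rw [show a + (k + p * a - a) = k + p * a by omega] at h2
      have h3 := h1.shift (m - a)
      rw [show k + p * a + (m - a) = m + (k + p * a - a) by omega] at h3
      have h4 : P00 d b k (k + (m - a)) := (h1.trans h2).trans h3.symm
      have h5 := (hP.mul ((m - a) / p)).shift ((m - a) % p)
      rw [show k + p * ((m - a) / p) + (m - a) % p = k + (m - a) by
        have := Nat.div_add_mod (m - a) p; omega] at h5
      have h6 : P00 d b k (k + (m - a) % p) := h4.trans h5.symm
      have h7 : (m - a) % p = 0 := by
        by_contra hne
        exact hp _ (Nat.mod_lt _ p0) ⟨Nat.pos_of_ne_zero hne, h6⟩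
      exact (Nat.modEq_iff_dvd' ham.le).2 (Nat.dvd_of_mod_eq_zero h7)
    intro a m h
    rcases lt_trichotomy a m with h1 | h1 | h1
    · have := main a m h1 h
      exact Or.inr ⟨this.1, by omega, this.2⟩
    · exact Or.inl h1
    · have := main m a h1 h.symm
      exact Or.inr ⟨by omega, this.1, this.2.symm⟩
  · left
    push Not at H
    intro a m h
    rcases lt_trichotomy a m with h1 | h1 | h1
    · exact absurd (by rwa [show a + (m - a) = m by omega]) (H a (m - a) (by omega))
    · exact h1
    · exact absurd (by rw [show m + (a - m) = a by omega]; exact h.symm) (H m (a - m) (by omega))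

theorem Good.facts {X : ℕ → ℕ → Prop} (g : Good d b X) {k p : ℕ} (D : Desc d b k p) {a m : ℕ}
    (h : X a m) : k ≤ a ∧ k ≤ m ∧ a ≡ m + 1 [MOD p] ∧ p ∣ 2 ∧ X k (k + 1) := by
  obtain ⟨p0, hP, D⟩ := D
  have h1 := D _ _ (g.l0 h)
  have h2 := D _ _ (g.l0 (g.symm h))
  have e1 : a ≡ m + 1 [MOD p] := by
    rcases h1 with h1 | h1
    · rw [h1]
    · exact h1.2.2
  have e2 : m ≡ a + 1 [MOD p] := by
    rcases h2 with h1 | h1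
    · rw [h1]
    · exact h1.2.2
  have ka : k ≤ a := by omega
  have km : k ≤ m := by omega
  have p2 : p ∣ 2 := by
    have : m + 0 ≡ m + 2 [MOD p] := e2.trans (e1.add_right 1)
    have := Nat.ModEq.add_left_cancel' _ this
    simpa using (Nat.modEq_iff_dvd' (by omega)).1 this
  refine ⟨ka, km, e1, p2, ?_⟩
  have hN : a ≤ k + p * a := by nlinarith
  have h3 := g.shift h (k + p * a - a)
  refine g.compat ?_ ?_ h3
  · rw [show a + (k + p * a - a) = k + p * a by omega]
    exact (hP.mul a).symm
  · refine hP.of_mod (by omega) (by omega) ?_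
    have : m + (k + p * a - a) ≡ a + 1 + (k + p * a - a) [MOD p] := e2.add_right _
    rw [show a + 1 + (k + p * a - a) = (k + 1) + p * a by omega] at this
    refine this.trans ?_
    simp [Nat.ModEq]

theorem Good.conv {X : ℕ → ℕ → Prop} (g : Good d b X) {k p : ℕ} (hP : P00 d b k (k + p))
    (p2 : p ∣ 2) (h : X k (k + 1)) {a m : ℕ} (ka : k ≤ a) (km : k ≤ m) (e : a ≡ m + 1 [MOD p]) :
    X a m := by
  have h1 := g.shift h (a - k)
  refine g.compat ?_ ?_ h1
  · rw [show k + (a - k) = a by omega]; exact rfl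
  · refine hP.of_mod (by omega) km ?_
    rw [show k + 1 + (a - k) = a + 1 by omega]
    refine (e.add_right 1).trans ?_
    have : 2 ≡ 0 [MOD p] := (Nat.modEq_zero_iff_dvd).2 p2
    exact this.add_left m

theorem P11.facts (hb : Base d b) {k p : ℕ} (D : Desc d b k p) {a m : ℕ} (h : P11 d b a m) :
    k ≤ a ∧ k ≤ m ∧ a ≡ m + 2 [MOD p] ∧ p ∣ 2 ∧ P10 d b k (k + 1) ∧ P01 d b k (k + 1) := by
  obtain ⟨h1, -, h3, h4, h5⟩ := (good10 hb).facts D (h.l10 hb)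
  obtain ⟨h1', -, h3', h4', h5'⟩ := (good01 hb).facts D (h.l01 hb)
  obtain ⟨h1'', -⟩ := (good01 hb).facts D ((h.symm hb).l01 hb)
  exact ⟨h1, h1'', h3, h4, h5, h5'⟩

theorem P11.conv (hb : Base d b) {k p : ℕ} (hP : P00 d b k (k + p)) (p2 : p ∣ 2)
    (h : P10 d b k (k + 1)) (h' : P01 d b k (k + 1)) {a m : ℕ} (ka : k ≤ a) (km : k ≤ m)
    (e : a ≡ m + 2 [MOD p]) : P11 d b a m :=
  P11.mk ((good10 hb).conv hP p2 h ka (by omega) e)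
    ((good01 hb).conv hP p2 h' (by omega) km rfl)

end monoid

section two
variable {Q Q' : Type*} [Monoid Q] [Monoid Q'] {d b : Q} {d' b' : Q'}

theorem ev_t_iff (hb : Base d b) (i i' j j' : Bool) (a m : ℕ) :
    ev d b (.t i a j) = ev d b (.t i' m j') ↔
      (match (i ^^ i'), (j ^^ j') with
        | false, false => P00 d b a m
        | true, false => P10 d b a m
        | false, true => P01 d b a m
        | true, true => P11 d b a m) := by
  have e1 : ∀ x y : Q, d * x = y ↔ x = d * y := fun x y =>
    ⟨fun h => by rw [← h, hb.ddx], fun h => by rw [h, hb.ddx]⟩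
  have e2 : ∀ x y : Q, x * d = y ↔ x = y * d := fun x y =>
    ⟨fun h => by rw [← h, hb.xdd], fun h => by rw [h, hb.xdd]⟩
  cases i <;> cases i' <;> cases j <;> cases j' <;>
    simp [ev, pw, P00, P10, P01, P11, e1, e2, hb.xdd, hb.ddx, mul_assoc]

/-- Transfer of the relations between the `t` normal forms. -/
theorem transfer (hb : Base d b) (hb' : Base d' b')
    (h00 : ∀ a m, P00 d b a m → P00 d' b' a m)
    (h10 : ∀ a m, P10 d b a m → P10 d' b' a m)
    (h01 : ∀ a m, P01 d b a m → P01 d' b' a m)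
    (h11 : ∀ a m, P11 d b a m → P11 d' b' a m)
    (i i' j j' : Bool) (a m : ℕ) (h : ev d b (.t i a j) = ev d b (.t i' m j')) :
    ev d' b' (.t i a j) = ev d' b' (.t i' m j') := by
  rw [ev_t_iff hb] at h
  rw [ev_t_iff hb']
  cases hi : (i ^^ i') <;> cases hj : (j ^^ j') <;> simp only [hi, hj] at h ⊢
  · exact h00 _ _ h
  · exact h01 _ _ h
  · exact h10 _ _ h
  · exact h11 _ _ h

end two

theorem nf_exists (w : F2) : ∃ n : NF, ∀ (Q : Type) [Monoid Q] (f : F2 →* Q),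
    Base (f dF) (f bF) → f w = ev (f dF) (f bF) n := by
  induction w using FreeMonoid.inductionOn' with
  | one => exact ⟨.u false, fun Q _ f _ => by simp [ev, pw]⟩
  | of_mul x w ih =>
    obtain ⟨n, hn⟩ := ih
    cases x with
    | true =>
      cases n with
      | u i =>
        refine ⟨.u (!i), fun Q _ f hb => ?_⟩
        rw [map_mul, hn Q f hb]
        change f dF * _ = _
        cases i <;> simp [ev, pw, hb.dd]
      | t i k j =>
        refine ⟨.t (!i) k j, fun Q _ f hb => ?_⟩
        rw [map_mul, hn Q f hb]
        change f dF * _ = _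
        cases i <;> simp [ev, pw, hb.dd, mul_assoc, hb.ddx]
    | false =>
      cases n with
      | u i =>
        refine ⟨.t false 0 i, fun Q _ f hb => ?_⟩
        rw [map_mul, hn Q f hb]
        change f bF * _ = _
        cases i <;> simp [ev, pw, TT]
      | t i k j =>
        refine ⟨.t false (if i then k + 1 else k) j, fun Q _ f hb => ?_⟩
        rw [map_mul, hn Q f hb]
        change f bF * _ = _
        cases i
        · simp [ev, pw, ← mul_assoc, hb.bT]
        · simp only [ev, pw]
          simp only [← mul_assoc]
          simp [mul_assoc (f bF), bdT]

/-- The base relations hold modulo `c`. -/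
abbrev CB (c : Con F2) : Prop := Base (c.mk' dF) (c.mk' bF)

theorem presCon_base (R : Set (F2 × F2)) : CB (presCon R) := by
  constructor
  · rw [← map_mul, ← map_one (presCon R).mk']
    exact (Con.eq _).2 (ConGen.Rel.of _ _ (by simp))
  · rw [← map_mul]
    exact (Con.eq _).2 (ConGen.Rel.of _ _ (by simp))

theorem presCon_le {c : Con F2} (hc : CB c) {R : Set (F2 × F2)}
    (h : ∀ p ∈ R, c.mk' p.1 = c.mk' p.2) : presCon R ≤ c := by
  refine Con.conGen_le.2 ?_
  rintro x y hxy
  refine (Con.eq c).1 ?_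
  change c.mk' x = c.mk' y
  rcases hxy with hxy | hxy | hxy
  · obtain ⟨rfl, rfl⟩ := Prod.mk.inj hxy
    rw [map_mul, hc.dd, map_one]
  · obtain ⟨rfl, rfl⟩ := Prod.mk.inj hxy
    rw [map_mul, hc.bb]
  · exact h _ hxy

/-- Reduction to normal forms. -/
theorem finish {c : Con F2} (hc : CB c) {R : Set (F2 × F2)}
    (h : ∀ p ∈ R, c.mk' p.1 = c.mk' p.2)
    (H : ∀ n n', ev (c.mk' dF) (c.mk' bF) n = ev (c.mk' dF) (c.mk' bF) n' →
      ev ((presCon R).mk' dF) ((presCon R).mk' bF) n =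
        ev ((presCon R).mk' dF) ((presCon R).mk' bF) n') : c = presCon R := by
  refine le_antisymm ?_ (presCon_le hc h)
  intro x y hxy
  obtain ⟨n, hn⟩ := nf_exists x
  obtain ⟨n', hn'⟩ := nf_exists y
  have h1 : c.mk' x = c.mk' y := (Con.eq c).2 hxy
  rw [hn _ _ hc, hn' _ _ hc] at h1
  have h2 := H n n' h1
  rw [← hn _ _ (presCon_base R), ← hn' _ _ (presCon_base R)] at h2
  exact (Con.eq _).1 h2

theorem finish1 {c : Con F2} (hc : CB c) (u v : F2) (huv : (u, v) ∈ genericEqs)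
    (h : c.mk' u = c.mk' v)
    (H : ∀ c' : Con F2, CB c' → c'.mk' u = c'.mk' v →
      ∀ n n', ev (c.mk' dF) (c.mk' bF) n = ev (c.mk' dF) (c.mk' bF) n' →
      ev (c'.mk' dF) (c'.mk' bF) n = ev (c'.mk' dF) (c'.mk' bF) n') :
    ∃ S' : Set (F2 × F2), S' ⊆ genericEqs ∧ S'.Subsingleton ∧ c = presCon S' := by
  refine ⟨{(u, v)}, by simpa using huv, Set.subsingleton_singleton, ?_⟩
  refine finish hc (by simpa using h) (H _ (presCon_base _) ?_)
  exact (Con.eq _).2 (ConGen.Rel.of _ _ (by simp))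

theorem map_TT {Q : Type*} [Monoid Q] (f : F2 →* Q) (k : ℕ) :
    f (TT dF bF k) = TT (f dF) (f bF) k := by
  simp [TT]

/-- Words in generic form. -/
def Gw (w : F2) : Prop := ∃ d0 f0 k0 : ℕ, d0 ≤ 1 ∧ f0 ≤ 1 ∧ w = bF ^ d0 * (dF * bF) ^ k0 * dF ^ f0

theorem Gw.mem {u v : F2} (hu : Gw u) (hv : Gw v) : (u, v) ∈ genericEqs := by
  obtain ⟨a, b, c, h1, h2, rfl⟩ := hu
  obtain ⟨a', b', c', h1', h2', rfl⟩ := hv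
  exact ⟨a, b, a', b', c, c', h1, h2, h1', h2', rfl⟩

theorem Gw1 : Gw 1 := ⟨0, 0, 0, by simp⟩
theorem Gwd : Gw dF := ⟨0, 1, 0, by simp⟩
theorem Gwb : Gw bF := ⟨1, 0, 0, by simp⟩
theorem Gwbd : Gw (bF * dF) := ⟨1, 1, 0, by simp⟩
theorem Gw00 (k : ℕ) : Gw (TT dF bF k) := ⟨1, 0, k, by simp [TT]⟩
theorem Gw01 (k : ℕ) : Gw (TT dF bF k * dF) := ⟨1, 1, k, by simp [TT]⟩
theorem Gw10 (k : ℕ) : Gw (dF * TT dF bF k) := ⟨0, 0, k + 1, by simp [TT, pow_succ', mul_assoc]⟩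
theorem Gw11 (k : ℕ) : Gw (dF * (TT dF bF k * dF)) :=
  ⟨0, 1, k + 1, by simp [TT, pow_succ', mul_assoc]⟩

theorem ev_b1 (i j : Bool) (k : ℕ) :
    ∃ e, ∀ {Q' : Type} [Monoid Q'] {d' b' : Q'}, Base d' b' → b' = 1 →
      ev d' b' (.t i k j) = ev d' b' (.u e) := by
  refine ⟨(i ^^ (k.bodd ^^ j)), ?_⟩
  intro Q' _ d' b' hb' h'
  have : d' ^ k = pw d' k.bodd := by
    induction k with
    | zero => simp [pw]
    | succ k ih =>
      rw [pow_succ, ih, Nat.bodd_succ]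
      cases k.bodd <;> simp [pw, hb'.dd]
  simp only [ev, TT, h', one_mul, mul_one, this]
  cases i <;> cases j <;> cases k.bodd <;> simp [pw, hb'.dd]

theorem key (c : Con F2) (hc : CB c) :
    ∃ S' : Set (F2 × F2), S' ⊆ genericEqs ∧ S'.Subsingleton ∧ c = presCon S' := by
  by_cases hA : ∃ i i' k j, ev (c.mk' dF) (c.mk' bF) (.u i') = ev (c.mk' dF) (c.mk' bF) (.t i k j)
  · -- then `b = 1`
    have hb1 : c.mk' bF = 1 := by
      obtain ⟨i, i', k, j, h⟩ := hA
      simp only [ev] at h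
      have h2 := congrArg (fun x => pw (c.mk' dF) i * x) h
      have hpp : ∀ x, pw (c.mk' dF) i * (pw (c.mk' dF) i * x) = x := by
        intro x; cases i
        · simp [pw]
        · simpa [pw] using hc.ddx x
      simp only [mul_assoc, hpp] at h2
      have h3 := congrArg (fun x => c.mk' bF * x) h2
      beta_reduce at h3
      rw [← mul_assoc (c.mk' bF) (TT _ _ _), hc.bT, ← h2] at h3
      have h4 := congrArg (fun x => x * (pw (c.mk' dF) i' * pw (c.mk' dF) i)) h3
      have h5 : (pw (c.mk' dF) i * pw (c.mk' dF) i') * (pw (c.mk' dF) i' * pw (c.mk' dF) i) = 1 := by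
        cases i <;> cases i' <;> simp only [pw, if_true, if_false, one_mul, mul_one, hc.dd, Bool.false_eq_true]
      beta_reduce at h4
      rw [mul_assoc (c.mk' bF), h5, mul_one] at h4
      exact h4
    by_cases hd : c.mk' dF = 1
    · refine finish1 hc _ _ (Gwbd.mem Gw1) (by simp only [map_mul, map_one, hb1, hd, one_mul]) ?_
      intro c' hc' h n n' _
      rw [map_mul, map_one] at h
      have hb : c'.mk' bF = 1 := by
        have h2 := congrArg (fun x => c'.mk' bF * x) h
        simp only [mul_one] at h2
        rw [← mul_assoc, hc'.bb, h] at h2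
        exact h2.symm
      rw [hb, one_mul] at h
      rw [hb, h]
      have : ∀ n, ev (1 : c'.Quotient) 1 n = 1 := by
        intro n; cases n <;> simp [ev, pw, TT]
      rw [this, this]
    · refine finish1 hc _ _ (Gwb.mem Gw1) (by rw [map_one, hb1]) ?_
      intro c' hc' h n n' hn
      rw [map_one] at h
      have hred : ∀ n, ∃ e, ev (c.mk' dF) (c.mk' bF) n = ev (c.mk' dF) (c.mk' bF) (.u e) ∧
          ev (c'.mk' dF) (c'.mk' bF) n = ev (c'.mk' dF) (c'.mk' bF) (.u e) := by
        intro n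
        cases n with
        | u e => exact ⟨e, rfl, rfl⟩
        | t i k j =>
          obtain ⟨e, he⟩ := ev_b1 i j k
          exact ⟨e, he hc hb1, he hc' h⟩
      obtain ⟨e, h1, h2⟩ := hred n
      obtain ⟨e', h1', h2'⟩ := hred n'
      rw [h1, h1'] at hn
      rw [h2, h2']
      have : e = e' := by
        cases e <;> cases e' <;> simp only [ev, pw, if_true, if_false, Bool.false_eq_true] at hn ⊢
        · exact (hd hn.symm).elim
        · exact (hd hn).elim
      rw [this]
  by_cases hd : c.mk' dF = 1
  · refine finish1 hc _ _ (Gwd.mem Gw1) (by rw [map_one, hd]) ?_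
    intro c' hc' h n n' hn
    rw [map_one] at h
    have hu : ∀ e, ev (c'.mk' dF) (c'.mk' bF) (.u e) = 1 := by
      intro e; cases e <;> simp only [ev, pw, h, ite_self]
    have ht : ∀ i k j, ev (c'.mk' dF) (c'.mk' bF) (.t i k j) = c'.mk' bF := by
      intro i k j
      simp only [ev, pw, h, ite_self, one_mul, mul_one, TT]
      induction k with
      | zero => simp
      | succ k ih => rw [pow_succ, ← mul_assoc, ih, hc'.bb]
    cases n with
    | u e =>
      cases n' with
      | u e' => rw [hu, hu]
      | t i k j => exact absurd ⟨_, _, _, _, hn⟩ hA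
    | t i k j =>
      cases n' with
      | u e' => exact absurd ⟨_, _, _, _, hn.symm⟩ hA
      | t i' k' j' => rw [ht, ht]
  -- the main case
  have trans' : ∀ c' : Con F2, CB c' →
      (∀ a m, P00 (c.mk' dF) (c.mk' bF) a m → P00 (c'.mk' dF) (c'.mk' bF) a m) →
      (∀ a m, P10 (c.mk' dF) (c.mk' bF) a m → P10 (c'.mk' dF) (c'.mk' bF) a m) →
      (∀ a m, P01 (c.mk' dF) (c.mk' bF) a m → P01 (c'.mk' dF) (c'.mk' bF) a m) →
      (∀ a m, P11 (c.mk' dF) (c.mk' bF) a m → P11 (c'.mk' dF) (c'.mk' bF) a m) →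
      ∀ n n', ev (c.mk' dF) (c.mk' bF) n = ev (c.mk' dF) (c.mk' bF) n' →
      ev (c'.mk' dF) (c'.mk' bF) n = ev (c'.mk' dF) (c'.mk' bF) n' := by
    intro c' hc' h00 h10 h01 h11 n n' hn
    cases n with
    | u e =>
      cases n' with
      | u e' =>
        have : e = e' := by
          cases e <;> cases e' <;> simp only [ev, pw, if_true, if_false, Bool.false_eq_true] at hn ⊢
          · exact (hd hn.symm).elim
          · exact (hd hn).elim
        rw [this]
      | t i k j => exact absurd ⟨_, _, _, _, hn⟩ hA
    | t i k j =>
      cases n' with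
      | u e' => exact absurd ⟨_, _, _, _, hn.symm⟩ hA
      | t i' k' j' => exact transfer hc hc' h00 h10 h01 h11 _ _ _ _ _ _ hn
  rcases exists_desc (d := c.mk' dF) (b := c.mk' bF) with htriv | ⟨k, p, D⟩
  · have n10 : ∀ a m, ¬ P10 (c.mk' dF) (c.mk' bF) a m := by
      intro a m h
      have h1 := htriv _ _ (h.l0 hc)
      have h2 := htriv _ _ ((h.symm hc).l0 hc)
      omega
    have n01 : ∀ a m, ¬ P01 (c.mk' dF) (c.mk' bF) a m := by
      intro a m h
      have h1 := htriv _ _ (h.l0 hc)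
      have h2 := htriv _ _ ((h.symm hc).l0 hc)
      omega
    refine ⟨∅, by simp, by simp, finish hc (by simp) (trans' _ (presCon_base _) ?_ ?_ ?_ ?_)⟩
    · intro a m h; rw [htriv _ _ h]; exact rfl
    · intro a m h; exact absurd h (n10 _ _)
    · intro a m h; exact absurd h (n01 _ _)
    · intro a m h; exact absurd (h.l10 hc) (n10 _ _)
  · have hP := D.2.1
    have p0 := D.1
    -- what has to be checked for the smaller congruence
    have red : ∀ c' : Con F2, CB c' → P00 (c'.mk' dF) (c'.mk' bF) k (k + p) →
        (P10 (c.mk' dF) (c.mk' bF) k (k + 1) → P10 (c'.mk' dF) (c'.mk' bF) k (k + 1)) →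
        (P01 (c.mk' dF) (c.mk' bF) k (k + 1) → P01 (c'.mk' dF) (c'.mk' bF) k (k + 1)) →
        ∀ n n', ev (c.mk' dF) (c.mk' bF) n = ev (c.mk' dF) (c.mk' bF) n' →
        ev (c'.mk' dF) (c'.mk' bF) n = ev (c'.mk' dF) (c'.mk' bF) n' := by
      intro c' hc' hP' hL hR
      refine trans' c' hc' ?_ ?_ ?_ ?_
      · intro a m h
        rcases D.2.2 a m h with rfl | ⟨h1, h2, h3⟩
        · exact rfl
        · exact hP'.of_mod h1 h2 h3
      · intro a m h
        obtain ⟨h1, h2, h3, h4, h5⟩ := (good10 hc).facts D h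
        exact (good10 hc').conv hP' h4 (hL h5) h1 h2 h3
      · intro a m h
        obtain ⟨h1, h2, h3, h4, h5⟩ := (good01 hc).facts D h
        exact (good01 hc').conv hP' h4 (hR h5) h1 h2 h3
      · intro a m h
        obtain ⟨h1, h2, h3, h4, h5, h6⟩ := h.facts hc D
        exact P11.conv hc' hP' h4 (hL h5) (hR h6) h1 h2 h3
    by_cases L : P10 (c.mk' dF) (c.mk' bF) k (k + 1)
    · have p2 := ((good10 hc).facts D L).2.2.2.1
      have p12 : p = 1 ∨ p = 2 := by
        have := Nat.le_of_dvd (by omega) p2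
        omega
      by_cases R : P01 (c.mk' dF) (c.mk' bF) k (k + 1)
      · rcases p12 with rfl | rfl
        · refine finish1 hc _ _ ((Gw00 k).mem (Gw11 (k + 1))) ?_ ?_
          · simp only [map_mul, map_TT]
            exact P11.conv hc hP p2 L R (by omega) (by omega) (Nat.modEq_one)
          · intro c' hc' h
            simp only [map_mul, map_TT] at h
            replace h : P11 (c'.mk' dF) (c'.mk' bF) k (k + 1) := h
            have hR := h.l01 hc'
            have hL := h.l10 hc'
            have h3 : P00 (c'.mk' dF) (c'.mk' bF) k (k + 3) := hR.l0 hc'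
            have h4 : P00 (c'.mk' dF) (c'.mk' bF) (k + 1) (k + 2) :=
              (((h.symm hc').l01 hc').l0 hc')
            have h5 : P00 (c'.mk' dF) (c'.mk' bF) (k + 2) (k + 3) := h4.shift 1
            have h6 : P00 (c'.mk' dF) (c'.mk' bF) k (k + 1) :=
              (h3.trans h5.symm).trans h4.symm
            exact red c' hc' h6 (fun _ => (good10 hc').compat rfl h4.symm hL)
              (fun _ => (good01 hc').compat rfl h4.symm hR)
        · refine finish1 hc _ _ ((Gw00 k).mem (Gw11 k)) ?_ ?_
          · simp only [map_mul, map_TT]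
            exact P11.conv hc hP p2 L R (by omega) (by omega) (by simp [Nat.ModEq])
          · intro c' hc' h
            simp only [map_mul, map_TT] at h
            replace h : P11 (c'.mk' dF) (c'.mk' bF) k k := h
            exact red c' hc' ((h.l01 hc').l0 hc') (fun _ => h.l10 hc') (fun _ => h.l01 hc')
      · rcases p12 with rfl | rfl
        · refine finish1 hc _ _ ((Gw00 k).mem (Gw10 k)) ?_ ?_
          · simp only [map_mul, map_TT]
            exact (good10 hc).conv hP p2 L (by omega) (by omega) (Nat.modEq_one)
          · intro c' hc' h
            simp only [map_mul, map_TT] at h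
            replace h : P10 (c'.mk' dF) (c'.mk' bF) k k := h
            exact red c' hc' (h.l0 hc') (fun _ => (good10 hc').compat rfl (h.l0 hc') h)
              (fun h => absurd h R)
        · refine finish1 hc _ _ ((Gw00 k).mem (Gw10 (k + 1))) ?_ ?_
          · simp only [map_mul, map_TT]
            exact L
          · intro c' hc' h
            simp only [map_mul, map_TT] at h
            replace h : P10 (c'.mk' dF) (c'.mk' bF) k (k + 1) := h
            exact red c' hc' (h.l0 hc') (fun _ => h) (fun h => absurd h R)
    · by_cases R : P01 (c.mk' dF) (c.mk' bF) k (k + 1)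
      · have p2 := ((good01 hc).facts D R).2.2.2.1
        have p12 : p = 1 ∨ p = 2 := by
          have := Nat.le_of_dvd (by omega) p2
          omega
        rcases p12 with rfl | rfl
        · refine finish1 hc _ _ ((Gw00 k).mem (Gw01 k)) ?_ ?_
          · simp only [map_mul, map_TT]
            exact (good01 hc).conv hP p2 R (by omega) (by omega) (Nat.modEq_one)
          · intro c' hc' h
            simp only [map_mul, map_TT] at h
            replace h : P01 (c'.mk' dF) (c'.mk' bF) k k := h
            exact red c' hc' (h.l0 hc') (fun h => absurd h L)
              (fun _ => (good01 hc').compat rfl (h.l0 hc') h)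
        · refine finish1 hc _ _ ((Gw00 k).mem (Gw01 (k + 1))) ?_ ?_
          · simp only [map_mul, map_TT]
            exact R
          · intro c' hc' h
            simp only [map_mul, map_TT] at h
            replace h : P01 (c'.mk' dF) (c'.mk' bF) k (k + 1) := h
            exact red c' hc' (h.l0 hc') (fun h => absurd h L) (fun _ => h)
      · refine finish1 hc _ _ ((Gw00 k).mem (Gw00 (k + p))) ?_ ?_
        · simp only [map_TT]
          exact hP
        · intro c' hc' h
          simp only [map_TT] at h
          exact red c' hc' h (fun h => absurd h L) (fun h => absurd h R)

end PIM

/-- Every strict 2-PIM has a presentation with at most three defining equations: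
`d² = 1`, `b² = b` and at most one further equation of the generic form. -/
theorem stmt_14 :
    ∀ S : Set (F2 × F2), S ⊆ genericEqs → S.Finite →
      ∃ S' : Set (F2 × F2), S' ⊆ genericEqs ∧ S'.Subsingleton ∧ presCon S = presCon S' := by
  intro S _ _
  exact PIM.key _ (PIM.presCon_base S)
end

section
/- Consider the family 𝔼 of equations over the free monoid on {d, b}: eq00(k, ℓ): (d·b)^k = (d·b)^(k+ℓ) for k, ℓ ≥ 1; eq01°(k): (d·b)^k = (d·b)^(k+1)·d; eq01•(k): (d·b)^k = (d·b)^k·d; eq10°(k): (d·b)^k = (b·d)^k·b; eq10•(k): (d·b)^k = (b·d)^(k−1)·b; eq11°(k): (d·b)^k = (b·d)^k; eq11•(k): (d·b)^k = (b·d)^(k+1), each for k ≥ 1. For any two equations eq and eq' in 𝔼, the presented monoids ⟨d, b ∣ d² = 1, b² = b, eq⟩ and ⟨d, b ∣ d² = 1, b² = b, eq'⟩ are isomorphic as monoids if and only if eq and eq' belong to the same family with the same parameters. -/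
/-- The monoid presented by `⟨d, b ∣ d² = 1, b² = b, R⟩`. -/
abbrev PresMon (R : Set (F2 × F2)) : Type := (presCon R).Quotient

/-- The seven parametrized families of normalized defining equations of strict 2-PIMs. -/
inductive NormEq : Type
  | e00 (k l : ℕ) : NormEq   -- (d·b)^k = (d·b)^(k+l)
  | e01c (k : ℕ) : NormEq    -- (d·b)^k = (d·b)^(k+1)·d
  | e01b (k : ℕ) : NormEq    -- (d·b)^k = (d·b)^k·d
  | e10c (k : ℕ) : NormEq    -- (d·b)^k = (b·d)^k·b
  | e10b (k : ℕ) : NormEq    -- (d·b)^k = (b·d)^(k-1)·b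
  | e11c (k : ℕ) : NormEq    -- (d·b)^k = (b·d)^k
  | e11b (k : ℕ) : NormEq    -- (d·b)^k = (b·d)^(k+1)

/-- The parameters of a normalized equation are (at least) `1`. -/
def NormEq.valid : NormEq → Prop
  | .e00 k l => 1 ≤ k ∧ 1 ≤ l
  | .e01c k => 1 ≤ k
  | .e01b k => 1 ≤ k
  | .e10c k => 1 ≤ k
  | .e10b k => 1 ≤ k
  | .e11c k => 1 ≤ k
  | .e11b k => 1 ≤ k

/-- The pair of words of the free monoid corresponding to a normalized equation. -/
def NormEq.pair : NormEq → F2 × F2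
  | .e00 k l => ((dF * bF) ^ k, (dF * bF) ^ (k + l))
  | .e01c k => ((dF * bF) ^ k, (dF * bF) ^ (k + 1) * dF)
  | .e01b k => ((dF * bF) ^ k, (dF * bF) ^ k * dF)
  | .e10c k => ((dF * bF) ^ k, (bF * dF) ^ k * bF)
  | .e10b k => ((dF * bF) ^ k, (bF * dF) ^ (k - 1) * bF)
  | .e11c k => ((dF * bF) ^ k, (bF * dF) ^ k)
  | .e11b k => ((dF * bF) ^ k, (bF * dF) ^ (k + 1))

/-- Normal forms: `u x` is `d^x`, and `s p x y` is `d^x b (d b)^p d^y`. -/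
inductive NN : Type
  | u (x : Bool) : NN
  | s (p : ℕ) (x y : Bool) : NN

namespace NN

def mul : NN → NN → NN
  | u a, u b => u (a ^^ b)
  | u a, s p x y => s p (a ^^ x) y
  | s p x y, u a => s p x (y ^^ a)
  | s p x y, s q x' y' => s (p + q + (y ^^ x').toNat) x y'

instance : Monoid NN where
  mul := mul
  one := u false
  mul_assoc a b c := by
    change mul (mul a b) c = mul a (mul b c)
    cases a <;> cases b <;> cases c <;> simp [mul] <;> omega
  one_mul a := by
    change mul (u false) a = a
    cases a <;> simp [mul]
  mul_one a := by
    change mul a (u false) = a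
    cases a <;> simp [mul]

theorem one_def : (1 : NN) = u false := rfl
@[simp] theorem uu (a b : Bool) : u a * u b = u (a ^^ b) := rfl
@[simp] theorem us (a : Bool) (p : ℕ) (x y : Bool) : u a * s p x y = s p (a ^^ x) y := rfl
@[simp] theorem su (a : Bool) (p : ℕ) (x y : Bool) : s p x y * u a = s p x (y ^^ a) := rfl
@[simp] theorem ss (p q : ℕ) (x y x' y' : Bool) :
    s p x y * s q x' y' = s (p + q + (y ^^ x').toNat) x y' := rfl

/-- The canonical map from words to normal forms. -/
def Phi : F2 →* NN := FreeMonoid.lift (fun a => if a then u true else s 0 false false)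

@[simp] theorem Phi_d : Phi dF = u true := by simp [Phi, dF]
@[simp] theorem Phi_b : Phi bF = s 0 false false := by simp [Phi, bF]

theorem db_pow (k : ℕ) : (u true * s 0 false false) ^ (k + 1) = s k true false := by
  induction k with
  | zero => simp
  | succ k ih => rw [pow_succ, ih]; simp

theorem bd_pow (k : ℕ) : (s 0 false false * u true) ^ (k + 1) = s k false true := by
  induction k with
  | zero => simp
  | succ k ih => rw [pow_succ, ih]; simp

theorem bd_pow_b (k : ℕ) :
    (s 0 false false * u true) ^ k * s 0 false false = s k false false := by
  cases k with
  | zero => simp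
  | succ k => rw [bd_pow]; simp

theorem Phi_surj : Function.Surjective Phi := by
  have hu : ∀ x, ∃ w, Phi w = u x := by
    intro x
    cases x
    · exact ⟨1, by simp [one_def]⟩
    · exact ⟨dF, by simp⟩
  intro a
  cases a with
  | u x => exact hu x
  | s p x y =>
    obtain ⟨w, hw⟩ := hu x
    obtain ⟨v, hv⟩ := hu y
    refine ⟨w * ((bF * dF) ^ p * bF) * v, ?_⟩
    simp only [map_mul, map_pow, hw, hv, Phi_d, Phi_b, bd_pow_b]
    simp

section ev
variable {Q : Type*} [Monoid Q] (D B : Q)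

def dp (x : Bool) : Q := if x then D else 1

def evf : NN → Q
  | u x => dp D x
  | s p x y => dp D x * (B * (D * B) ^ p) * dp D y

theorem dp_mul (hD : D * D = 1) (x y : Bool) : dp D x * dp D y = dp D (x ^^ y) := by
  cases x <;> cases y <;> simp [dp, hD]

theorem core (hD : D * D = 1) (hB : B * B = B) (p q : ℕ) (y x : Bool) :
    (B * (D * B) ^ p) * dp D y * (dp D x * (B * (D * B) ^ q))
      = B * (D * B) ^ (p + q + (y ^^ x).toNat) := by
  have h1 : (B * (D * B) ^ p) * B = B * (D * B) ^ p := by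
    cases p with
    | zero => simp [hB]
    | succ p => simp only [pow_succ, mul_assoc, hB]
  have h2 : (B * (D * B) ^ p) * dp D y * (dp D x * (B * (D * B) ^ q))
      = (B * (D * B) ^ p) * (dp D y * dp D x) * (B * (D * B) ^ q) := by
    simp only [mul_assoc]
  rw [h2, dp_mul D hD]
  cases h : (y ^^ x)
  · simp only [dp, Bool.false_eq_true, if_false, mul_one, Bool.toNat_false, add_zero]
    rw [← mul_assoc, h1, mul_assoc, ← pow_add]
  · simp only [dp, if_true, Bool.toNat_true]
    rw [pow_succ', pow_add]
    have : (D * B) * (D * B) ^ p = (D * B) ^ p * (D * B) := by rw [← pow_succ', ← pow_succ]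
    calc B * (D * B) ^ p * D * (B * (D * B) ^ q)
        = B * ((D * B) ^ p * (D * B)) * (D * B) ^ q := by simp only [mul_assoc]
      _ = _ := by rw [← this]; simp only [mul_assoc]

def ev (hD : D * D = 1) (hB : B * B = B) : NN →* Q where
  toFun := evf D B
  map_one' := by simp [one_def, evf, dp]
  map_mul' a b := by
    cases a with
    | u a =>
      cases b with
      | u b => simp [evf, dp_mul D hD]
      | s p x y => simp only [us, evf, ← dp_mul D hD, mul_assoc]
    | s p x y =>
      cases b with
      | u b => simp only [su, evf, ← dp_mul D hD, mul_assoc]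
      | s q x' y' =>
        simp only [ss, evf]
        rw [← core D B hD hB]
        simp only [mul_assoc]
end ev

/-- Data describing a congruence on the ideal of long words. -/
structure Dat (T V W : Type) where
  g : ℕ → Bool → Bool → T
  ld : ∀ {p x y p' x' y'}, g p x y = g p' x' y' → ∀ a, g p (a ^^ x) y = g p' (a ^^ x') y'
  rd : ∀ {p x y p' x' y'}, g p x y = g p' x' y' → ∀ a, g p x (y ^^ a) = g p' x' (y' ^^ a)
  lm : ∀ {p x y p' x' y'}, g p x y = g p' x' y' → ∀ q a b,
    g (q + p + (b ^^ x).toNat) a y = g (q + p' + (b ^^ x').toNat) a y'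
  rm : ∀ {p x y p' x' y'}, g p x y = g p' x' y' → ∀ q a b,
    g (p + q + (y ^^ a).toNat) x b = g (p' + q + (y' ^^ a).toNat) x' b
  cof : ∀ n p x y, ∃ m, g (m + n) x y = g p x y
  sur : ∀ τ, ∃ p x y, g p x y = τ
  hr : Bool → V → T
  hr_inj : ∀ x, Function.Injective (hr x)
  hr_mem : ∀ p x y, ∃ v, hr x v = g p x y
  hr_sur : ∀ x v, ∃ p y, g p x y = hr x v
  hl : Bool → W → T
  hl_inj : ∀ y, Function.Injective (hl y)
  hl_mem : ∀ p x y, ∃ v, hl y v = g p x y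
  hl_sur : ∀ y v, ∃ p x, g p x y = hl y v

section dat
variable {T V W : Type} (δ : Dat T V W) (t : ℕ)

def cc : NN → Bool ⊕ ((Fin t × Bool × Bool) ⊕ T)
  | u x => .inl x
  | s p x y => if h : p < t then .inr (.inl (⟨p, h⟩, x, y)) else .inr (.inr (δ.g p x y))

theorem cc_ge {p : ℕ} (h : t ≤ p) (x y : Bool) : cc δ t (s p x y) = .inr (.inr (δ.g p x y)) := by
  simp [cc, h]

def Rel (a b : NN) : Prop :=
  a = b ∨ ∃ p x y p' x' y', a = s p x y ∧ b = s p' x' y' ∧ t ≤ p ∧ t ≤ p' ∧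
    δ.g p x y = δ.g p' x' y'

theorem cc_iff (a b : NN) : cc δ t a = cc δ t b ↔ Rel δ t a b := by
  constructor
  · intro h
    cases a with
    | u x =>
      cases b with
      | u y => left; simpa [cc] using h
      | s p x y => by_cases hp : p < t <;> simp [cc, hp] at h
    | s p x y =>
      cases b with
      | u y => by_cases hp : p < t <;> simp [cc, hp] at h
      | s p' x' y' =>
        by_cases hp : p < t <;> by_cases hp' : p' < t <;> simp [cc, hp, hp'] at h
        · left; simp [h]
        · right; exact ⟨p, x, y, p', x', y', rfl, rfl, by omega, by omega, h⟩
  · rintro (rfl | ⟨p, x, y, p', x', y', rfl, rfl, h1, h2, h3⟩)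
    · rfl
    · rw [cc_ge δ t h1, cc_ge δ t h2, h3]

theorem rel_left {a b : NN} (h : Rel δ t a b) (z : NN) : Rel δ t (z * a) (z * b) := by
  rcases h with rfl | ⟨p, x, y, p', x', y', rfl, rfl, h1, h2, h3⟩
  · exact Or.inl rfl
  · right
    cases z with
    | u c => exact ⟨_, _, _, _, _, _, us _ _ _ _, us _ _ _ _, h1, h2, δ.ld h3 c⟩
    | s q c e =>
      exact ⟨_, _, _, _, _, _, ss _ _ _ _ _ _, ss _ _ _ _ _ _, by omega, by omega, δ.lm h3 q c e⟩

theorem rel_right {a b : NN} (h : Rel δ t a b) (z : NN) : Rel δ t (a * z) (b * z) := by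
  rcases h with rfl | ⟨p, x, y, p', x', y', rfl, rfl, h1, h2, h3⟩
  · exact Or.inl rfl
  · right
    cases z with
    | u c => exact ⟨_, _, _, _, _, _, su _ _ _ _, su _ _ _ _, h1, h2, δ.rd h3 c⟩
    | s q c e =>
      exact ⟨_, _, _, _, _, _, ss _ _ _ _ _ _, ss _ _ _ _ _ _, by omega, by omega, δ.rm h3 q c e⟩

def KC : Con NN where
  r a b := cc δ t a = cc δ t b
  iseqv := ⟨fun _ => rfl, fun h => h.symm, fun h h' => h.trans h'⟩
  mul' {a b c e} h h' := by
    have h1 := (cc_iff δ t _ _).2 (rel_right δ t ((cc_iff δ t _ _).1 h) c)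
    have h2 := (cc_iff δ t _ _).2 (rel_left δ t ((cc_iff δ t _ _).1 h') b)
    exact h1.trans h2

theorem cc_surj : Function.Surjective (cc δ t) := by
  rintro (x | ⟨⟨p, hp⟩, x, y⟩ | τ)
  · exact ⟨u x, rfl⟩
  · exact ⟨s p x y, by simp [cc, hp]⟩
  · obtain ⟨p, x, y, rfl⟩ := δ.sur τ
    obtain ⟨m, hm⟩ := δ.cof t p x y
    exact ⟨s (m + t) x y, by rw [cc_ge δ t (by omega), hm]⟩

theorem range_right_ge [Finite T] (z : NN) :
    Nat.card V ≤ Nat.card (Set.range fun a => cc δ t (z * a)) := by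
  have key : ∃ x, ∀ v, (Sum.inr (Sum.inr (δ.hr x v)) : Bool ⊕ ((Fin t × Bool × Bool) ⊕ T)) ∈
      Set.range fun a => cc δ t (z * a) := by
    cases z with
    | u c =>
      refine ⟨false, fun v => ?_⟩
      obtain ⟨p, y, h⟩ := δ.hr_sur false v
      obtain ⟨m, hm⟩ := δ.cof t p false y
      refine ⟨s (m + t) c y, ?_⟩
      simp only [us, Bool.xor_self]
      rw [cc_ge δ t (by omega), hm, h]
    | s q x e =>
      refine ⟨x, fun v => ?_⟩
      obtain ⟨p, y, h⟩ := δ.hr_sur x v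
      obtain ⟨m, hm⟩ := δ.cof (q + t) p x y
      refine ⟨s (m + t) e y, ?_⟩
      simp only [ss, Bool.xor_self, Bool.toNat_false, add_zero]
      rw [cc_ge δ t (by omega), show q + (m + t) = m + (q + t) by omega, hm, h]
  obtain ⟨x, hx⟩ := key
  refine Nat.card_le_card_of_injective (fun v => ⟨_, hx v⟩) ?_
  intro v w hvw
  simp only [Subtype.mk.injEq, Sum.inr.injEq] at hvw
  exact δ.hr_inj x hvw

theorem range_left_ge [Finite T] (z : NN) :
    Nat.card W ≤ Nat.card (Set.range fun a => cc δ t (a * z)) := by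
  have key : ∃ y, ∀ v, (Sum.inr (Sum.inr (δ.hl y v)) : Bool ⊕ ((Fin t × Bool × Bool) ⊕ T)) ∈
      Set.range fun a => cc δ t (a * z) := by
    cases z with
    | u c =>
      refine ⟨false, fun v => ?_⟩
      obtain ⟨p, x, h⟩ := δ.hl_sur false v
      obtain ⟨m, hm⟩ := δ.cof t p x false
      refine ⟨s (m + t) x c, ?_⟩
      simp only [su, Bool.xor_self]
      rw [cc_ge δ t (by omega), hm, h]
    | s q e y =>
      refine ⟨y, fun v => ?_⟩
      obtain ⟨p, x, h⟩ := δ.hl_sur y v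
      obtain ⟨m, hm⟩ := δ.cof (q + t) p x y
      refine ⟨s (m + t) x e, ?_⟩
      simp only [ss, Bool.xor_self, Bool.toNat_false, add_zero]
      rw [cc_ge δ t (by omega), show (m + t) + q = m + (q + t) by omega, hm, h]
  obtain ⟨x, hx⟩ := key
  refine Nat.card_le_card_of_injective (fun v => ⟨_, hx v⟩) ?_
  intro v w hvw
  simp only [Subtype.mk.injEq, Sum.inr.injEq] at hvw
  exact δ.hl_inj x hvw

theorem range_right_le [Finite V] :
    Nat.card (Set.range fun a => cc δ t (s t false false * a)) ≤ Nat.card V := by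
  have hsub : (Set.range fun a => cc δ t (s t false false * a)) ⊆
      Set.range (fun v => (Sum.inr (Sum.inr (δ.hr false v)) :
        Bool ⊕ ((Fin t × Bool × Bool) ⊕ T))) := by
    rintro _ ⟨a, rfl⟩
    have : ∃ p y, t ≤ p ∧ s t false false * a = s p false y := by
      cases a with
      | u c => exact ⟨_, _, le_rfl, su _ _ _ _⟩
      | s q x y => exact ⟨_, _, by omega, ss _ _ _ _ _ _⟩
    obtain ⟨p, y, hp, h⟩ := this
    obtain ⟨v, hv⟩ := δ.hr_mem p false y
    exact ⟨v, by simp only [h]; rw [cc_ge δ t hp, hv]⟩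
  exact (Nat.card_mono (Set.finite_range _) hsub).trans (Finite.card_range_le _)

theorem range_left_le [Finite W] :
    Nat.card (Set.range fun a => cc δ t (a * s t false false)) ≤ Nat.card W := by
  have hsub : (Set.range fun a => cc δ t (a * s t false false)) ⊆
      Set.range (fun v => (Sum.inr (Sum.inr (δ.hl false v)) :
        Bool ⊕ ((Fin t × Bool × Bool) ⊕ T))) := by
    rintro _ ⟨a, rfl⟩
    have : ∃ p x, t ≤ p ∧ a * s t false false = s p x false := by
      cases a with
      | u c => exact ⟨_, _, le_rfl, us _ _ _ _⟩
      | s q x y => exact ⟨_, _, by omega, ss _ _ _ _ _ _⟩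
    obtain ⟨p, y, hp, h⟩ := this
    obtain ⟨v, hv⟩ := δ.hl_mem p y false
    exact ⟨v, by simp only [h]; rw [cc_ge δ t hp, hv]⟩
  exact (Nat.card_mono (Set.finite_range _) hsub).trans (Finite.card_range_le _)

end dat
end NN

open NN

/-- Smallest size of a principal right ideal. -/
noncomputable def alp (M : Type) [Monoid M] : ℕ :=
  sInf (Set.range fun z : M => Nat.card (Set.range fun a => z * a))

/-- Smallest size of a principal left ideal. -/
noncomputable def bet (M : Type) [Monoid M] : ℕ :=
  sInf (Set.range fun z : M => Nat.card (Set.range fun a => a * z))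

theorem alp_le_card {M : Type} [Monoid M] (z : M) :
    alp M ≤ Nat.card (Set.range fun a => z * a) := Nat.sInf_le ⟨z, rfl⟩

theorem bet_le_card {M : Type} [Monoid M] (z : M) :
    bet M ≤ Nat.card (Set.range fun a => a * z) := Nat.sInf_le ⟨z, rfl⟩

theorem alp_le {M N : Type} [Monoid M] [Monoid N] (f : M ≃* N) : alp M ≤ alp N := by
  obtain ⟨z, hz⟩ := Nat.sInf_mem (Set.range_nonempty
    fun z : N => Nat.card (Set.range fun a => z * a))
  refine (alp_le_card (f.symm z)).trans (le_of_eq ?_)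
  unfold alp
  rw [← hz]
  refine Nat.card_congr (Equiv.subtypeEquiv f.toEquiv fun m => ?_)
  constructor
  · rintro ⟨a, rfl⟩; exact ⟨f a, by simp⟩
  · rintro ⟨a, h⟩; exact ⟨f.symm a, f.injective (by simpa using h)⟩

theorem bet_le {M N : Type} [Monoid M] [Monoid N] (f : M ≃* N) : bet M ≤ bet N := by
  obtain ⟨z, hz⟩ := Nat.sInf_mem (Set.range_nonempty
    fun z : N => Nat.card (Set.range fun a => a * z))
  refine (bet_le_card (f.symm z)).trans (le_of_eq ?_)
  unfold bet
  rw [← hz]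
  refine Nat.card_congr (Equiv.subtypeEquiv f.toEquiv fun m => ?_)
  constructor
  · rintro ⟨a, rfl⟩; exact ⟨f a, by simp⟩
  · rintro ⟨a, h⟩; exact ⟨f.symm a, f.injective (by simpa using h)⟩

theorem inv_gen {T V W : Type} [Finite T] [Finite V] [Finite W] (δ : Dat T V W) (t : ℕ)
    (pr : F2 × F2) (h1 : Rel δ t (Phi pr.1) (Phi pr.2))
    (h2 : ∀ θ : Con NN, θ (Phi pr.1) (Phi pr.2) → ∀ p x y p' x' y', t ≤ p → t ≤ p' →
      δ.g p x y = δ.g p' x' y' → θ (s p x y) (s p' x' y')) :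
    Nat.card (PresMon {pr}) = 2 + 4 * t + Nat.card T ∧
    alp (PresMon {pr}) = Nat.card V ∧ bet (PresMon {pr}) = Nat.card W := by
  set M := PresMon {pr}
  let mk : F2 →* M := (presCon {pr}).mk'
  have mk_iff : ∀ w w', mk w = mk w' ↔ presCon {pr} w w' := fun w w' => Con.eq _
  have hD : mk dF * mk dF = 1 := by
    rw [← map_mul, ← map_one mk, mk_iff]
    exact ConGen.Rel.of _ _ (by simp)
  have hB : mk bF * mk bF = mk bF := by
    rw [← map_mul, mk_iff]
    exact ConGen.Rel.of _ _ (by simp)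
  have hP : mk pr.1 = mk pr.2 := by
    rw [mk_iff]
    exact ConGen.Rel.of _ _ (by simp)
  let ψ : NN →* M := ev (mk dF) (mk bF) hD hB
  have hψ0 : ψ.comp Phi = mk := by
    refine FreeMonoid.hom_eq fun a => ?_
    cases a
    · change ψ (Phi bF) = mk bF
      rw [Phi_b]; simp [ψ, ev, evf, dp]
    · change ψ (Phi dF) = mk dF
      rw [Phi_d]; simp [ψ, ev, evf, dp]
  have hψ : ∀ w, ψ (Phi w) = mk w := fun w => DFunLike.congr_fun hψ0 w
  have ψs : Function.Surjective ψ := by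
    intro m
    obtain ⟨w, rfl⟩ := (presCon {pr}).mk'_surjective m
    exact ⟨Phi w, hψ w⟩
  have ker : ∀ a b, ψ a = ψ b ↔ cc δ t a = cc δ t b := by
    intro a b
    constructor
    · intro h
      obtain ⟨w, rfl⟩ := Phi_surj a
      obtain ⟨w', rfl⟩ := Phi_surj b
      rw [hψ, hψ, mk_iff] at h
      have hle : presCon {pr} ≤ (KC δ t).comap Phi (map_mul Phi) := by
        refine Con.conGen_le.2 ?_
        intro x y hxy
        change cc δ t (Phi x) = cc δ t (Phi y)
        simp only [Set.mem_insert_iff, Set.mem_singleton_iff, Prod.mk.injEq] at hxy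
        rcases hxy with ⟨rfl, rfl⟩ | ⟨rfl, rfl⟩ | h
        · simp [one_def]
        · simp
        · rw [cc_iff]; rw [← h] at h1; exact h1
      exact hle h
    · intro h
      rw [cc_iff] at h
      rcases h with rfl | ⟨p, x, y, p', x', y', rfl, rfl, q1, q2, q3⟩
      · rfl
      · exact h2 (Con.ker ψ) (by change ψ _ = ψ _; rw [hψ, hψ, hP]) p x y p' x' y' q1 q2 q3
  let f : M → Bool ⊕ ((Fin t × Bool × Bool) ⊕ T) := fun m => cc δ t (Function.surjInv ψs m)
  have hf : ∀ a, f (ψ a) = cc δ t a := fun a => (ker _ _).1 (Function.surjInv_eq ψs _)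
  have fb : Function.Bijective f := by
    constructor
    · intro m m' h
      obtain ⟨a, rfl⟩ := ψs m
      obtain ⟨b, rfl⟩ := ψs m'
      rw [hf, hf] at h
      exact (ker _ _).2 h
    · intro c
      obtain ⟨a, rfl⟩ := cc_surj δ t c
      exact ⟨ψ a, hf a⟩
  have cR : ∀ z, Nat.card (Set.range fun a => ψ z * a)
      = Nat.card (Set.range fun a => cc δ t (z * a)) := by
    intro z
    refine Nat.card_congr (Equiv.subtypeEquiv (Equiv.ofBijective f fb) fun m => ?_)
    constructor
    · rintro ⟨a, rfl⟩
      obtain ⟨a, rfl⟩ := ψs a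
      exact ⟨a, by simp [← map_mul, hf]⟩
    · rintro ⟨a, h⟩
      exact ⟨ψ a, fb.1 (by simpa [← map_mul, hf] using h)⟩
  have cL : ∀ z, Nat.card (Set.range fun a => a * ψ z)
      = Nat.card (Set.range fun a => cc δ t (a * z)) := by
    intro z
    refine Nat.card_congr (Equiv.subtypeEquiv (Equiv.ofBijective f fb) fun m => ?_)
    constructor
    · rintro ⟨a, rfl⟩
      obtain ⟨a, rfl⟩ := ψs a
      exact ⟨a, by simp [← map_mul, hf]⟩
    · rintro ⟨a, h⟩
      exact ⟨ψ a, fb.1 (by simpa [← map_mul, hf] using h)⟩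
  refine ⟨?_, ?_, ?_⟩
  · rw [Nat.card_congr (Equiv.ofBijective f fb)]
    simp [Nat.card_sum, Nat.card_prod]
    ring
  · apply le_antisymm
    · refine (alp_le_card (ψ (s t false false))).trans ?_
      rw [cR]
      exact range_right_le δ t
    · refine le_csInf (Set.range_nonempty _) ?_
      rintro _ ⟨m, rfl⟩
      obtain ⟨z, rfl⟩ := ψs m
      exact (range_right_ge δ t z).trans_eq (cR z).symm
  · apply le_antisymm
    · refine (bet_le_card (ψ (s t false false))).trans ?_
      rw [cL]
      exact range_left_le δ t
    · refine le_csInf (Set.range_nonempty _) ?_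
      rintro _ ⟨m, rfl⟩
      obtain ⟨z, rfl⟩ := ψs m
      exact (range_left_ge δ t z).trans_eq (cL z).symm

/-! The seven congruences. -/

def dat00 (l : ℕ) [NeZero l] : Dat (ZMod l × Bool × Bool) (ZMod l × Bool) (ZMod l × Bool) where
  g p x y := ((p : ZMod l), x, y)
  ld := by
    intro p x y p' x' y' h a
    simp only [Prod.mk.injEq] at h ⊢
    obtain ⟨h, rfl, rfl⟩ := h
    exact ⟨h, rfl, rfl⟩
  rd := by
    intro p x y p' x' y' h a
    simp only [Prod.mk.injEq] at h ⊢
    obtain ⟨h, rfl, rfl⟩ := h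
    exact ⟨h, rfl, rfl⟩
  lm := by
    intro p x y p' x' y' h q a b
    simp only [Prod.mk.injEq] at h ⊢
    obtain ⟨h, rfl, rfl⟩ := h
    exact ⟨by push_cast; rw [h], by simp⟩
  rm := by
    intro p x y p' x' y' h q a b
    simp only [Prod.mk.injEq] at h ⊢
    obtain ⟨h, rfl, rfl⟩ := h
    exact ⟨by push_cast; rw [h], by simp⟩
  cof n p x y := by
    have hl : 1 ≤ l := NeZero.one_le
    obtain ⟨c, hc⟩ := Nat.exists_eq_add_of_le (Nat.le_mul_of_pos_left n hl)
    refine ⟨p + c, ?_⟩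
    rw [show p + c + n = p + l * n by omega]
    simp
  sur := by
    rintro ⟨a, x, y⟩
    exact ⟨a.val, x, y, by simp⟩
  hr x v := (v.1, x, v.2)
  hr_inj := by
    rintro x ⟨a, b⟩ ⟨c, e⟩ h
    simpa using h
  hr_mem p x y := ⟨(p, y), rfl⟩
  hr_sur := by
    rintro x ⟨a, b⟩
    exact ⟨a.val, b, by simp⟩
  hl y v := (v.1, v.2, y)
  hl_inj := by
    rintro x ⟨a, b⟩ ⟨c, e⟩ h
    simpa using h
  hl_mem p x y := ⟨(p, x), rfl⟩
  hl_sur := by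
    rintro x ⟨a, b⟩
    exact ⟨a.val, b, by simp⟩

theorem bodd_toNat (x : Bool) : Nat.bodd x.toNat = x := by cases x <;> rfl

theorem cof2 (n p : ℕ) : Nat.bodd (p + n + n) = Nat.bodd p := by
  simp [Nat.bodd_add, Bool.xor_assoc]

def dat01c : Dat (Bool × Bool) Bool (Bool × Bool) where
  g p x y := (x, p.bodd ^^ y)
  ld := by intros; simp_all
  rd := by
    intro p x y p' x' y' h a
    simp only [Prod.mk.injEq] at h ⊢
    obtain ⟨rfl, h⟩ := h
    revert h
    generalize p.bodd = P; generalize p'.bodd = P'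
    revert P P' x y y' a; decide
  lm := by
    intro p x y p' x' y' h q a b
    simp only [Prod.mk.injEq, Nat.bodd_add, bodd_toNat] at h ⊢
    obtain ⟨rfl, h⟩ := h
    revert h
    generalize p.bodd = P; generalize p'.bodd = P'; generalize q.bodd = R
    revert P P' R x y y' a b; decide
  rm := by
    intro p x y p' x' y' h q a b
    simp only [Prod.mk.injEq, Nat.bodd_add, bodd_toNat] at h ⊢
    obtain ⟨rfl, h⟩ := h
    revert h
    generalize p.bodd = P; generalize p'.bodd = P'; generalize q.bodd = R
    revert P P' R x y y' a b; decide
  cof n p x y := ⟨p + n, by rw [cof2]⟩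
  sur := by rintro ⟨x, y⟩; exact ⟨0, x, y, by simp⟩
  hr x v := (x, v)
  hr_inj := by intro x a b h; simpa using h
  hr_mem p x y := ⟨_, rfl⟩
  hr_sur x v := ⟨0, v, by simp⟩
  hl y v := v
  hl_inj := by intro x a b h; simpa using h
  hl_mem p x y := ⟨_, rfl⟩
  hl_sur := by
    rintro y ⟨x, v⟩
    exact ⟨(v ^^ y).toNat, x, by simp [bodd_toNat]⟩

def dat10c : Dat (Bool × Bool) (Bool × Bool) Bool where
  g p x y := (p.bodd ^^ x, y)
  ld := by
    intro p x y p' x' y' h a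
    simp only [Prod.mk.injEq] at h ⊢
    obtain ⟨h, rfl⟩ := h
    revert h
    generalize p.bodd = P; generalize p'.bodd = P'
    revert P P' x x' y a; decide
  rd := by intros; simp_all
  lm := by
    intro p x y p' x' y' h q a b
    simp only [Prod.mk.injEq, Nat.bodd_add, bodd_toNat] at h ⊢
    obtain ⟨h, rfl⟩ := h
    revert h
    generalize p.bodd = P; generalize p'.bodd = P'; generalize q.bodd = R
    revert P P' R x y x' a b; decide
  rm := by
    intro p x y p' x' y' h q a b
    simp only [Prod.mk.injEq, Nat.bodd_add, bodd_toNat] at h ⊢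
    obtain ⟨h, rfl⟩ := h
    revert h
    generalize p.bodd = P; generalize p'.bodd = P'; generalize q.bodd = R
    revert P P' R x y x' a b; decide
  cof n p x y := ⟨p + n, by rw [cof2]⟩
  sur := by rintro ⟨x, y⟩; exact ⟨0, x, y, by simp⟩
  hr x v := v
  hr_inj := by intro x a b h; simpa using h
  hr_mem p x y := ⟨_, rfl⟩
  hr_sur := by
    rintro x ⟨v, y⟩
    exact ⟨(v ^^ x).toNat, y, by simp [bodd_toNat]⟩
  hl y v := (v, y)
  hl_inj := by intro x a b h; simpa using h
  hl_mem p x y := ⟨_, rfl⟩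
  hl_sur x v := ⟨0, v, by simp⟩

def dat11c : Dat Bool Bool Bool where
  g p x y := p.bodd ^^ x ^^ y
  ld := by
    intro p x y p' x' y' h a
    revert h
    generalize p.bodd = P; generalize p'.bodd = P'
    revert P P' x x' y y' a; decide
  rd := by
    intro p x y p' x' y' h a
    revert h
    generalize p.bodd = P; generalize p'.bodd = P'
    revert P P' x x' y y' a; decide
  lm := by
    intro p x y p' x' y' h q a b
    simp only [Nat.bodd_add, bodd_toNat] at h ⊢
    revert h
    generalize p.bodd = P; generalize p'.bodd = P'; generalize q.bodd = R
    revert P P' R x y x' y' a b; decide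
  rm := by
    intro p x y p' x' y' h q a b
    simp only [Nat.bodd_add, bodd_toNat] at h ⊢
    revert h
    generalize p.bodd = P; generalize p'.bodd = P'; generalize q.bodd = R
    revert P P' R x y x' y' a b; decide
  cof n p x y := ⟨p + n, by rw [cof2]⟩
  sur x := ⟨0, x, false, by simp⟩
  hr x v := v
  hr_inj := by intro x a b h; simpa using h
  hr_mem p x y := ⟨_, rfl⟩
  hr_sur x v := ⟨(v ^^ x).toNat, false, by simp [bodd_toNat]⟩
  hl y v := v
  hl_inj := by intro x a b h; simpa using h
  hl_mem p x y := ⟨_, rfl⟩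
  hl_sur y v := ⟨(v ^^ y).toNat, false, by simp [bodd_toNat]⟩

def dat01b : Dat Bool Unit Bool where
  g p x y := x
  ld := by intros; simp_all
  rd := by intros; simp_all
  lm := by intros; simp_all
  rm := by intros; simp_all
  cof n p x y := ⟨0, rfl⟩
  sur x := ⟨0, x, false, rfl⟩
  hr x _ := x
  hr_inj := by intro x a b h; rfl
  hr_mem p x y := ⟨(), rfl⟩
  hr_sur x v := ⟨0, false, rfl⟩
  hl y v := v
  hl_inj := by intro x a b h; exact h
  hl_mem p x y := ⟨_, rfl⟩
  hl_sur y v := ⟨0, v, rfl⟩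

def dat10b : Dat Bool Bool Unit where
  g p x y := y
  ld := by intros; simp_all
  rd := by intros; simp_all
  lm := by intros; simp_all
  rm := by intros; simp_all
  cof n p x y := ⟨0, rfl⟩
  sur x := ⟨0, false, x, rfl⟩
  hr y v := v
  hr_inj := by intro x a b h; exact h
  hr_mem p x y := ⟨_, rfl⟩
  hr_sur y v := ⟨0, v, rfl⟩
  hl x _ := x
  hl_inj := by intro x a b h; rfl
  hl_mem p x y := ⟨(), rfl⟩
  hl_sur x v := ⟨0, false, rfl⟩

def dat11b : Dat Unit Unit Unit where
  g p x y := ()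
  ld := by intros; rfl
  rd := by intros; rfl
  lm := by intros; rfl
  rm := by intros; rfl
  cof n p x y := ⟨0, rfl⟩
  sur x := ⟨0, false, false, rfl⟩
  hr y v := v
  hr_inj := by intro x a b h; exact h
  hr_mem p x y := ⟨_, rfl⟩
  hr_sur y v := ⟨0, false, rfl⟩
  hl x _ := ()
  hl_inj := by intro x a b h; rfl
  hl_mem p x y := ⟨(), rfl⟩
  hl_sur x v := ⟨0, false, rfl⟩

/-! Deriving the identifications from the defining equation. -/

theorem mulL {θ : Con NN} {a b : NN} (h : θ a b) (z : NN) : θ (z * a) (z * b) :=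
  θ.mul (θ.refl z) h

theorem mulR {θ : Con NN} {a b : NN} (h : θ a b) (z : NN) : θ (a * z) (b * z) :=
  θ.mul h (θ.refl z)

theorem via {θ : Con NN} {t : ℕ} (r : ℕ → Bool → Bool → NN)
    (h : ∀ j x y, θ (s (t + j) x y) (r j x y)) {p p' : ℕ} {x y x' y' : Bool}
    (hp : t ≤ p) (hp' : t ≤ p') (hr : r (p - t) x y = r (p' - t) x' y') :
    θ (s p x y) (s p' x' y') := by
  have h1 := h (p - t) x y
  have h2 := h (p' - t) x' y'
  rw [Nat.add_sub_cancel' hp] at h1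
  rw [Nat.add_sub_cancel' hp'] at h2
  rw [← hr] at h2
  exact θ.trans h1 (θ.symm h2)

theorem th00 (t l : ℕ) [NeZero l] (θ : Con NN) (h : θ (s t true false) (s (t + l) true false)) :
    ∀ p x y p' x' y', t ≤ p → t ≤ p' →
      (dat00 l).g p x y = (dat00 l).g p' x' y' → θ (s p x y) (s p' x' y') := by
  have step : ∀ j x y, θ (s (t + j) x y) (s (t + j + l) x y) := by
    intro j x y
    have := mulR (mulL h (u (!x))) (s j false y)
    simp only [us, ss] at this
    rw [show t + l + j = t + j + l by omega] at this
    simpa using this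
  have key : ∀ c j x y, θ (s (t + j) x y) (s (t + (j + l * c)) x y) := by
    intro c j x y
    induction c with
    | zero => exact θ.refl _
    | succ c ih =>
      have := step (j + l * c) x y
      rw [show t + (j + l * c) + l = t + (j + l * (c + 1)) by ring] at this
      exact θ.trans ih this
  intro p x y p' x' y' hp hp' hg
  simp only [dat00, Prod.mk.injEq] at hg
  obtain ⟨h1, rfl, rfl⟩ := hg
  rw [ZMod.natCast_eq_natCast_iff] at h1
  wlog hle : p ≤ p' generalizing p p'
  · exact θ.symm (this p' p hp' hp h1.symm (by omega))
  obtain ⟨c, hc⟩ := (Nat.modEq_iff_dvd' hle).1 h1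
  have := key c (p - t) x y
  rwa [show t + (p - t) = p by omega, show t + (p - t + l * c) = p' by omega] at this

theorem th01c (t : ℕ) (θ : Con NN) (h : θ (s t true false) (s (t + 1) true true)) :
    ∀ p x y p' x' y', t ≤ p → t ≤ p' →
      dat01c.g p x y = dat01c.g p' x' y' → θ (s p x y) (s p' x' y') := by
  have step : ∀ j x y, θ (s (t + (j + 1)) x y) (s (t + j) x (!y)) := by
    intro j x y
    have := θ.symm (mulR (mulL h (s j x true)) (u (!y)))
    simp only [su, ss] at this
    rw [show t + (j + 1) = j + (t + 1) by omega, show t + j = j + t by omega]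
    simpa using this
  have key : ∀ j x y, θ (s (t + j) x y) (s t x (j.bodd ^^ y)) := by
    intro j
    induction j with
    | zero => intro x y; simpa using θ.refl _
    | succ j ih =>
      intro x y
      have := θ.trans (step j x y) (ih x (!y))
      simpa using this
  intro p x y p' x' y' hp hp' hg
  refine via _ key hp hp' ?_
  obtain ⟨j, rfl⟩ := Nat.exists_eq_add_of_le hp
  obtain ⟨j', rfl⟩ := Nat.exists_eq_add_of_le hp'
  simpa [dat01c, Nat.bodd_add, Bool.xor_assoc] using hg

theorem th10c (t : ℕ) (θ : Con NN) (h : θ (s t true false) (s (t + 1) false false)) :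
    ∀ p x y p' x' y', t ≤ p → t ≤ p' →
      dat10c.g p x y = dat10c.g p' x' y' → θ (s p x y) (s p' x' y') := by
  have step : ∀ j x y, θ (s (t + (j + 1)) x y) (s (t + j) (!x) y) := by
    intro j x y
    have := θ.symm (mulR (mulL h (u x)) (s j false y))
    simp only [us, ss] at this
    rw [show t + (j + 1) = t + 1 + j by omega]
    simpa using this
  have key : ∀ j x y, θ (s (t + j) x y) (s t (j.bodd ^^ x) y) := by
    intro j
    induction j with
    | zero => intro x y; simpa using θ.refl _
    | succ j ih =>
      intro x y
      have := θ.trans (step j x y) (ih (!x) y)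
      simpa using this
  intro p x y p' x' y' hp hp' hg
  refine via _ key hp hp' ?_
  obtain ⟨j, rfl⟩ := Nat.exists_eq_add_of_le hp
  obtain ⟨j', rfl⟩ := Nat.exists_eq_add_of_le hp'
  simpa [dat10c, Nat.bodd_add, Bool.xor_assoc] using hg

theorem th11c (t : ℕ) (θ : Con NN) (h : θ (s t true false) (s t false true)) :
    ∀ p x y p' x' y', t ≤ p → t ≤ p' →
      dat11c.g p x y = dat11c.g p' x' y' → θ (s p x y) (s p' x' y') := by
  have h1 : θ (s t true false) (s (t + 1) false false) := by
    simpa using mulR h (s 0 false false)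
  have h0 := th10c t θ h1
  have flip : ∀ x, θ (s t x true) (s t (!x) false) := by
    intro x
    simpa using θ.symm (mulL h (u x))
  have key : ∀ j x y, θ (s (t + j) x y) (s t (j.bodd ^^ x ^^ y) false) := by
    intro j x y
    have a : θ (s (t + j) x y) (s t (j.bodd ^^ x) y) :=
      h0 _ _ _ _ _ _ (by omega) le_rfl (by simp [dat10c, Nat.bodd_add, Bool.xor_assoc])
    cases y
    · simpa using a
    · have := θ.trans a (flip _)
      simpa using this
  intro p x y p' x' y' hp hp' hg
  refine via _ key hp hp' ?_
  obtain ⟨j, rfl⟩ := Nat.exists_eq_add_of_le hp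
  obtain ⟨j', rfl⟩ := Nat.exists_eq_add_of_le hp'
  simpa [dat11c, Nat.bodd_add, Bool.xor_assoc] using hg

theorem th01b (t : ℕ) (θ : Con NN) (h : θ (s t true false) (s t true true)) :
    ∀ p x y p' x' y', t ≤ p → t ≤ p' →
      dat01b.g p x y = dat01b.g p' x' y' → θ (s p x y) (s p' x' y') := by
  have flat : ∀ j x, θ (s (t + j) x true) (s (t + j) x false) := by
    intro j x
    have := θ.symm (mulL h (s j x true))
    simp only [ss] at this
    rw [add_comm t j]
    simpa using this
  have key : ∀ j x y, θ (s (t + j) x y) (s t x false) := by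
    intro j
    induction j with
    | zero =>
      intro x y
      cases y
      · exact θ.refl _
      · exact flat 0 x
    | succ j ih =>
      intro x y
      have a : θ (s (t + (j + 1)) x false) (s (t + j) x false) := by
        simpa [add_assoc] using mulR (flat j x) (s 0 false false)
      have b : θ (s (t + (j + 1)) x y) (s (t + (j + 1)) x false) := by
        cases y
        · exact θ.refl _
        · exact flat _ x
      exact θ.trans b (θ.trans a (ih x false))
  intro p x y p' x' y' hp hp' hg
  refine via _ key hp hp' ?_
  simpa [dat01b] using hg

theorem th10b (t : ℕ) (θ : Con NN) (h : θ (s t true false) (s t false false)) :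
    ∀ p x y p' x' y', t ≤ p → t ≤ p' →
      dat10b.g p x y = dat10b.g p' x' y' → θ (s p x y) (s p' x' y') := by
  have flat : ∀ j y, θ (s (t + j) true y) (s (t + j) false y) := by
    intro j y
    simpa using mulR h (s j false y)
  have key : ∀ j x y, θ (s (t + j) x y) (s t false y) := by
    intro j
    induction j with
    | zero =>
      intro x y
      cases x
      · exact θ.refl _
      · exact flat 0 y
    | succ j ih =>
      intro x y
      have a : θ (s (t + (j + 1)) false y) (s (t + j) false y) := by
        simpa [add_assoc] using mulL (flat j y) (s 0 false false)
      have b : θ (s (t + (j + 1)) x y) (s (t + (j + 1)) false y) := by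
        cases x
        · exact θ.refl _
        · exact flat _ y
      exact θ.trans b (θ.trans a (ih false y))
  intro p x y p' x' y' hp hp' hg
  refine via _ key hp hp' ?_
  simpa [dat10b] using hg

theorem th11b (t : ℕ) (θ : Con NN) (h : θ (s t true false) (s (t + 1) false true)) :
    ∀ p x y p' x' y', t ≤ p → t ≤ p' →
      dat11b.g p x y = dat11b.g p' x' y' → θ (s p x y) (s p' x' y') := by
  have h1 : θ (s t true true) (s (t + 1) false false) := by simpa using mulR h (u true)
  have h2 : θ (s (t + 1) true false) (s (t + 1) false false) := by
    simpa using mulR h1 (s 0 false false)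
  have h3 : θ (s (t + 1) false true) (s (t + 1) false false) := by
    simpa [add_comm] using mulL h1 (s 0 false false)
  have h4 : θ (s t true false) (s t true true) := θ.trans h (θ.trans h3 (θ.symm h1))
  have h5 : θ (s t false true) (s (t + 1) true false) := by simpa using mulL h1 (u true)
  have h6 : θ (s t true false) (s t false false) := by
    have a : θ (s t true false) (s t false true) := 
      θ.trans (θ.trans h h3) (θ.trans (θ.symm h2) (θ.symm h5))
    have b : θ (s t false true) (s t false false) := by simpa using θ.symm (mulL h4 (u true))
    exact θ.trans a b
  have e1 := th01b t θ h4
  have e2 := th10b t θ h6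
  intro p x y p' x' y' hp hp' _
  exact θ.trans (e1 p x y p' x y' hp hp' rfl) (e2 p' x y' p' x' y' hp' hp' rfl)

def val : NormEq → ℕ × ℕ × ℕ
  | .e00 k l => (4 * (k + l) - 2, 2 * l, 2 * l)
  | .e01c k => (4 * k + 2, 2, 4)
  | .e01b k => (4 * k, 1, 2)
  | .e10c k => (4 * k + 2, 4, 2)
  | .e10b k => (4 * k, 2, 1)
  | .e11c k => (4 * k, 2, 2)
  | .e11b k => (4 * k - 1, 1, 1)

theorem inv_val (e : NormEq) (he : e.valid) :
    Nat.card (PresMon {e.pair}) = (val e).1 ∧ alp (PresMon {e.pair}) = (val e).2.1 ∧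
      bet (PresMon {e.pair}) = (val e).2.2 := by
  cases e with
  | e00 k l =>
    obtain ⟨hk, hl⟩ := he
    obtain ⟨t, rfl⟩ := Nat.exists_eq_add_of_le' hk
    haveI : NeZero l := ⟨by omega⟩
    have p1 : Phi (NormEq.e00 (t + 1) l).pair.1 = s t true false := by
      simp only [NormEq.pair, map_pow, map_mul, Phi_d, Phi_b, db_pow]
    have p2 : Phi (NormEq.e00 (t + 1) l).pair.2 = s (t + l) true false := by
      simp only [NormEq.pair, map_pow, map_mul, Phi_d, Phi_b]
      rw [show t + 1 + l = t + l + 1 by omega, db_pow]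
    obtain ⟨a, b, c⟩ := inv_gen (dat00 l) t (NormEq.e00 (t + 1) l).pair
      (by rw [p1, p2]; exact Or.inr ⟨_, _, _, _, _, _, rfl, rfl, by omega, by omega, by simp [dat00]⟩)
      (by rw [p1, p2]; exact th00 t l)
    rw [a, b, c]
    simp [val, Nat.card_prod]
    omega
  | e01c k =>
    obtain ⟨t, rfl⟩ := Nat.exists_eq_add_of_le' (show 1 ≤ k from he)
    have p1 : Phi (NormEq.e01c (t + 1)).pair.1 = s t true false := by
      simp only [NormEq.pair, map_pow, map_mul, Phi_d, Phi_b, db_pow]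
    have p2 : Phi (NormEq.e01c (t + 1)).pair.2 = s (t + 1) true true := by
      simp only [NormEq.pair, map_pow, map_mul, Phi_d, Phi_b, db_pow]
      simp
    obtain ⟨a, b, c⟩ := inv_gen dat01c t (NormEq.e01c (t + 1)).pair
      (by rw [p1, p2]; exact Or.inr ⟨_, _, _, _, _, _, rfl, rfl, by omega, by omega, by simp [dat01c]⟩)
      (by rw [p1, p2]; exact th01c t)
    rw [a, b, c]
    simp [val, Nat.card_prod]
    omega
  | e01b k =>
    obtain ⟨t, rfl⟩ := Nat.exists_eq_add_of_le' (show 1 ≤ k from he)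
    have p1 : Phi (NormEq.e01b (t + 1)).pair.1 = s t true false := by
      simp only [NormEq.pair, map_pow, map_mul, Phi_d, Phi_b, db_pow]
    have p2 : Phi (NormEq.e01b (t + 1)).pair.2 = s t true true := by
      simp only [NormEq.pair, map_pow, map_mul, Phi_d, Phi_b, db_pow]
      simp
    obtain ⟨a, b, c⟩ := inv_gen dat01b t (NormEq.e01b (t + 1)).pair
      (by rw [p1, p2]; exact Or.inr ⟨_, _, _, _, _, _, rfl, rfl, by omega, by omega, by simp [dat01b]⟩)
      (by rw [p1, p2]; exact th01b t)
    rw [a, b, c]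
    simp [val]
    omega
  | e10c k =>
    obtain ⟨t, rfl⟩ := Nat.exists_eq_add_of_le' (show 1 ≤ k from he)
    have p1 : Phi (NormEq.e10c (t + 1)).pair.1 = s t true false := by
      simp only [NormEq.pair, map_pow, map_mul, Phi_d, Phi_b, db_pow]
    have p2 : Phi (NormEq.e10c (t + 1)).pair.2 = s (t + 1) false false := by
      simp only [NormEq.pair, map_pow, map_mul, Phi_d, Phi_b, bd_pow_b]
    obtain ⟨a, b, c⟩ := inv_gen dat10c t (NormEq.e10c (t + 1)).pair
      (by rw [p1, p2]; exact Or.inr ⟨_, _, _, _, _, _, rfl, rfl, by omega, by omega, by simp [dat10c]⟩)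
      (by rw [p1, p2]; exact th10c t)
    rw [a, b, c]
    simp [val, Nat.card_prod]
    omega
  | e10b k =>
    obtain ⟨t, rfl⟩ := Nat.exists_eq_add_of_le' (show 1 ≤ k from he)
    have p1 : Phi (NormEq.e10b (t + 1)).pair.1 = s t true false := by
      simp only [NormEq.pair, map_pow, map_mul, Phi_d, Phi_b, db_pow]
    have p2 : Phi (NormEq.e10b (t + 1)).pair.2 = s t false false := by
      simp only [NormEq.pair, map_pow, map_mul, Phi_d, Phi_b, bd_pow_b, Nat.add_sub_cancel]
    obtain ⟨a, b, c⟩ := inv_gen dat10b t (NormEq.e10b (t + 1)).pair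
      (by rw [p1, p2]; exact Or.inr ⟨_, _, _, _, _, _, rfl, rfl, by omega, by omega, by simp [dat10b]⟩)
      (by rw [p1, p2]; exact th10b t)
    rw [a, b, c]
    simp [val]
    omega
  | e11c k =>
    obtain ⟨t, rfl⟩ := Nat.exists_eq_add_of_le' (show 1 ≤ k from he)
    have p1 : Phi (NormEq.e11c (t + 1)).pair.1 = s t true false := by
      simp only [NormEq.pair, map_pow, map_mul, Phi_d, Phi_b, db_pow]
    have p2 : Phi (NormEq.e11c (t + 1)).pair.2 = s t false true := by
      simp only [NormEq.pair, map_pow, map_mul, Phi_d, Phi_b, bd_pow]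
    obtain ⟨a, b, c⟩ := inv_gen dat11c t (NormEq.e11c (t + 1)).pair
      (by rw [p1, p2]; exact Or.inr ⟨_, _, _, _, _, _, rfl, rfl, by omega, by omega, by simp [dat11c]⟩)
      (by rw [p1, p2]; exact th11c t)
    rw [a, b, c]
    simp [val]
    omega
  | e11b k =>
    obtain ⟨t, rfl⟩ := Nat.exists_eq_add_of_le' (show 1 ≤ k from he)
    have p1 : Phi (NormEq.e11b (t + 1)).pair.1 = s t true false := by
      simp only [NormEq.pair, map_pow, map_mul, Phi_d, Phi_b, db_pow]
    have p2 : Phi (NormEq.e11b (t + 1)).pair.2 = s (t + 1) false true := by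
      simp only [NormEq.pair, map_pow, map_mul, Phi_d, Phi_b, bd_pow]
    obtain ⟨a, b, c⟩ := inv_gen dat11b t (NormEq.e11b (t + 1)).pair
      (by rw [p1, p2]; exact Or.inr ⟨_, _, _, _, _, _, rfl, rfl, by omega, by omega, rfl⟩)
      (by rw [p1, p2]; exact th11b t)
    rw [a, b, c]
    simp [val]
    omega

theorem val_inj (e e' : NormEq) (he : e.valid) (he' : e'.valid) (h : val e = val e') : e = e' := by
  cases e <;> cases e' <;> simp only [val, NormEq.valid, Prod.mk.injEq] at * <;>
    simp only [NormEq.e00.injEq, NormEq.e01c.injEq, NormEq.e01b.injEq, NormEq.e10c.injEq,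
      NormEq.e10b.injEq, NormEq.e11c.injEq, NormEq.e11b.injEq, reduceCtorEq] <;> omega

/-- Classification of strict 2-PIMs: two presented monoids
`⟨d, b ∣ d² = 1, b² = b, eq⟩` and `⟨d, b ∣ d² = 1, b² = b, eq'⟩` with `eq, eq' ∈ 𝔼`
are isomorphic if and only if the equations belong to the same family
with the same parameters. -/
theorem stmt_19 (e e' : NormEq) (he : e.valid) (he' : e'.valid) :
    Nonempty (PresMon {e.pair} ≃* PresMon {e'.pair}) ↔ e = e' := by
  constructor
  · rintro ⟨f⟩
    obtain ⟨a, b, c⟩ := inv_val e he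
    obtain ⟨a', b', c'⟩ := inv_val e' he'
    have h1 := Nat.card_congr f.toEquiv
    have h2 := le_antisymm (alp_le f) (alp_le f.symm)
    have h3 := le_antisymm (bet_le f) (bet_le f.symm)
    rw [a, a'] at h1
    rw [b, b'] at h2
    rw [c, c'] at h3
    exact val_inj e e' he he' (Prod.ext h1 (Prod.ext h2 h3))
  · rintro rfl
    exact ⟨MulEquiv.refl _⟩
end
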